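/- Schur orthogonality on the unitary group: let N be a positive integer, λ a Young diagram with at most N rows, and V, W ∈ U(N). Then ∫_{U(N)} s_λ(U V U* W) dm_N(U) = s_λ(V)·s_λ(W) / d_λ, where d_λ = s_λ(1,…,1) = ∏_{1≤i<j≤N}(l_i − l_j)/∏_{i=1}^{N−1} i! with l_i = λ_i + N − i. -/

import Mathlib

/-- A semistandard Young tableau of shape `lam` (a Young diagram with at most `N` rows,
given as a nonincreasing function `Fin N → ℕ`), with entries in `Fin N` (representing
the integers `1, …, N`).  `entry i j` is the entry in row `i` and column `j` (0-indexed);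
rows are weakly increasing, columns are strictly increasing, and entries outside of the
shape are normalized to `0`. -/
structure SSYT (N : ℕ) (lam : Fin N → ℕ) where
  entry : Fin N → ℕ → Fin N
  rowWeak : ∀ (i : Fin N) (j1 j2 : ℕ), j1 ≤ j2 → j2 < lam i → entry i j1 ≤ entry i j2
  colStrict : ∀ (i1 i2 : Fin N), i1 < i2 → ∀ j : ℕ, j < lam i2 → entry i1 j < entry i2 j
  zeroOutside : ∀ (i : Fin N) (j : ℕ), lam i ≤ j → (entry i j : ℕ) = 0

/-- The content of a semistandard Young tableau: `content T k` is the number of cells of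
`T` whose entry equals `k`. -/
noncomputable def SSYT.content {N : ℕ} {lam : Fin N → ℕ} (T : SSYT N lam) (k : Fin N) : ℕ :=
  ∑ i : Fin N, ((Finset.range (lam i)).filter (fun j => T.entry i j = k)).card

/-- The Schur polynomial `s_lam (x 0, …, x (N-1))`, defined as the sum over all semistandard
Young tableaux `T` of shape `lam` with entries in `{1, …, N}` of the monomial
`∏ k, (x k) ^ (number of entries of T equal to k)`. -/
noncomputable def schur {R : Type*} [CommRing R] [TopologicalSpace R] (N : ℕ)
    (lam : Fin N → ℕ) (x : Fin N → R) : R :=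
  ∑' T : SSYT N lam, ∏ k : Fin N, x k ^ T.content k

/-- Matrices are endowed with the Borel sigma-algebra of their (entrywise) topology. -/
noncomputable instance matrixMeasurableSpace {m n α : Type*} [TopologicalSpace α] :
    MeasurableSpace (Matrix m n α) := borel _

open MeasureTheory

/-- The Schur polynomial of an `N × N` complex matrix: `s_λ(C)` is `s_λ` evaluated at the
`N` eigenvalues of `C` (the roots, with multiplicity, of its characteristic polynomial);
this is well defined since `s_λ` is symmetric. -/
noncomputable def schurMat (N : ℕ) (lam : Fin N → ℕ) (C : Matrix (Fin N) (Fin N) ℂ) : ℂ :=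
  schur N lam (fun i => C.charpoly.roots.toList.getD (i : ℕ) 0)

open MeasureTheory

namespace SO
open Finset

def dlt (N : ℕ) (i : Fin N) : ℕ := N - 1 - i

def alt {R : Type*} [CommRing R] (N : ℕ) (k : Fin N → ℕ) (x : Fin N → R) : R :=
  Matrix.det (Matrix.of fun i j => x j ^ k i)

lemma alt_step {R : Type*} [CommRing R] (n : ℕ) (l : Fin (n+1) → ℕ) (hl : StrictAnti l)
    (x : Fin (n+1) → R) :
    alt (n+1) l x = x (Fin.last n) ^ l (Fin.last n) *
      ((∏ j : Fin n, (x j.castSucc - x (Fin.last n))) *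
      ∑ m ∈ Fintype.piFinset (fun i : Fin n => Ico (l i.succ) (l i.castSucc)),
        (∏ i : Fin n, x (Fin.last n) ^ (l i.castSucc - 1 - m i)) *
          alt n m (fun j => x j.castSucc)) := by
  set z := x (Fin.last n) with hz
  have hlt : ∀ i : Fin n, l i.succ ≤ l i.castSucc := fun i => (hl (Fin.castSucc_lt_succ)).le
  let g : Matrix (Fin n) (Fin n) R := Matrix.of fun i j =>
    ∑ m ∈ Ico (l i.succ) (l i.castSucc), z ^ (l i.castSucc - 1 - m) * x j.castSucc ^ m
  let B : Matrix (Fin (n+1)) (Fin (n+1)) R := Matrix.of fun i j =>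
    Fin.lastCases (motive := fun _ => R) (x j ^ l (Fin.last n))
      (fun i => x j ^ l i.castSucc - z ^ (l i.castSucc - l i.succ) * x j ^ l i.succ) i
  have hB1 : alt (n+1) l x = B.det := by
    unfold alt
    rw [← Matrix.det_submatrix_equiv_self Fin.revPerm, ← Matrix.det_submatrix_equiv_self Fin.revPerm B]
    apply Matrix.det_eq_of_forall_row_eq_smul_add_pred
      (fun i => z ^ (l i.rev.castSucc - l i.rev.succ))
    · intro j; simp [B]
    · intro i j
      simp only [Matrix.submatrix_apply, Fin.revPerm_apply, Matrix.of_apply, Fin.rev_succ,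
        Fin.rev_castSucc, B, Fin.lastCases_castSucc]
      ring
  have hB2 : B.det = z ^ l (Fin.last n) * (Matrix.of fun (i j : Fin n) =>
      (x j.castSucc - z) * g i j).det := by
    rw [Matrix.det_succ_column B (Fin.last n), Finset.sum_eq_single (Fin.last n)]
    · have h1 : ((-1 : R)) ^ (((Fin.last n : Fin (n+1)) : ℕ) + ((Fin.last n : Fin (n+1)) : ℕ)) = 1 := by
        rw [← two_mul, pow_mul]; simp
      rw [h1]
      congr 1
      · simp [B, hz]
      · congr 1
        ext i j
        simp only [Matrix.submatrix_apply, Fin.succAbove_last, B, Matrix.of_apply,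
          Fin.lastCases_castSucc, g]
        have := mul_geom_sum₂_Ico (x := x j.castSucc) (y := z) (hlt i)
        rw [mul_comm (z ^ _), ← this]
        congr 1
        exact Finset.sum_congr rfl fun _ _ => mul_comm _ _
    · intro i _ hi
      obtain ⟨i, rfl⟩ := Fin.exists_castSucc_eq.2 hi
      simp only [B, Matrix.of_apply, Fin.lastCases_castSucc, ← hz, ← pow_add,
        Nat.sub_add_cancel (hlt i)]
      simp
    · simp
  rw [hB1, hB2, Matrix.det_mul_row]
  congr 2
  have : g.det = Matrix.detRowAlternating (fun i => ∑ m ∈ Ico (l i.succ) (l i.castSucc),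
      (fun j => z ^ (l i.castSucc - 1 - m) * x j.castSucc ^ m : Fin n → R)) := by
    change Matrix.detRowAlternating g = _
    congr 1
    ext i j
    simp [g]
  rw [this]
  have h2 := (Matrix.detRowAlternating (n := Fin n) (R := R)).toMultilinearMap.map_sum_finset
    (fun (i : Fin n) (m : ℕ) => (fun j => z ^ (l i.castSucc - 1 - m) * x j.castSucc ^ m : Fin n → R))
    (fun i => Ico (l i.succ) (l i.castSucc))
  refine h2.trans (Finset.sum_congr rfl fun m _ => ?_)
  exact Matrix.det_mul_column (fun i => z ^ (l i.castSucc - 1 - m i)) (Matrix.of fun i j => x j.castSucc ^ m i)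

end SO
open MeasureTheory

namespace SO
open Finset

lemma ssyt_ext {N : ℕ} {lam : Fin N → ℕ} {S T : SSYT N lam} (h : ∀ i j, j < lam i → S.entry i j = T.entry i j) :
    S = T := by
  obtain ⟨s, s1, s2, s3⟩ := S
  obtain ⟨t, t1, t2, t3⟩ := T
  have : s = t := by
    funext i j
    by_cases hj : j < lam i
    · exact h i j hj
    · apply Fin.ext
      rw [s3 i j (not_lt.1 hj), t3 i j (not_lt.1 hj)]
  subst this
  rfl

noncomputable instance ssytFintype (N : ℕ) (lam : Fin N → ℕ) : Fintype (SSYT N lam) := by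
  have : Function.Injective (fun (T : SSYT N lam) (i : Fin N) (j : Fin (lam i)) => T.entry i j) := by
    intro S T h
    apply ssyt_ext
    intro i j hj
    exact congrFun (congrFun h i) ⟨j, hj⟩
  exact Fintype.ofInjective _ this

noncomputable def schF {R : Type*} [CommRing R] (N : ℕ) (lam : Fin N → ℕ) (x : Fin N → R) : R :=
  ∑ T : SSYT N lam, ∏ k : Fin N, x k ^ T.content k

lemma schur_eq {R : Type*} [CommRing R] [TopologicalSpace R] (N : ℕ) (lam : Fin N → ℕ) (x : Fin N → R) :
    schur N lam x = schF N lam x := by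
  unfold schur schF
  exact tsum_fintype _

def inter (n : ℕ) (lam : Fin (n+1) → ℕ) : Finset (Fin n → ℕ) :=
  Fintype.piFinset (fun i : Fin n => Icc (lam i.succ) (lam i.castSucc))

noncomputable def mu {n : ℕ} {lam : Fin (n+1) → ℕ} (T : SSYT (n+1) lam) (i : Fin n) : ℕ :=
  ((range (lam i.castSucc)).filter (fun j => T.entry i.castSucc j ≠ Fin.last n)).card

lemma filter_range_card (L : ℕ) (p : ℕ → Prop) [DecidablePred p]
    (hp : ∀ a b, a ≤ b → b < L → p b → p a) (j : ℕ) (hj : j < L) :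
    p j ↔ j < ((range L).filter p).card := by
  constructor
  · intro h
    have : range (j+1) ⊆ (range L).filter p := by
      intro a ha
      simp only [mem_range, mem_filter] at *
      exact ⟨by omega, hp a j (by omega) hj h⟩
    simpa using card_le_card this
  · intro h
    by_contra hn
    have : (range L).filter p ⊆ range j := by
      intro a ha
      simp only [mem_range, mem_filter] at *
      by_contra hc
      exact hn (hp j a (by omega) ha.1 ha.2)
    have := card_le_card this
    simp at this; omega

lemma mu_iff {n : ℕ} {lam : Fin (n+1) → ℕ} (T : SSYT (n+1) lam) (i : Fin n) (j : ℕ)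
    (hj : j < lam i.castSucc) : T.entry i.castSucc j ≠ Fin.last n ↔ j < mu T i := by
  apply filter_range_card _ _ _ j hj
  intro a b hab hb h
  have := T.rowWeak i.castSucc a b hab hb
  intro h2
  rw [h2] at this
  exact h (le_antisymm (Fin.le_last _) this)

lemma mu_mem {n : ℕ} {lam : Fin (n+1) → ℕ} (hlam : Antitone lam) (T : SSYT (n+1) lam) :
    mu T ∈ inter n lam := by
  rw [inter, Fintype.mem_piFinset]
  intro i
  rw [mem_Icc]
  constructor
  · by_contra hc
    push Not at hc
    have h1 : lam i.succ ≤ lam i.castSucc := hlam (Fin.castSucc_lt_succ).le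
    have h2 := (mu_iff T i (mu T i) (by omega)).1
    have h3 := T.colStrict i.castSucc i.succ Fin.castSucc_lt_succ (mu T i) hc
    exact absurd (h2 (ne_of_lt (lt_of_lt_of_le h3 (Fin.le_last _)))) (lt_irrefl _)
  · exact (card_filter_le _ _).trans (by simp)

lemma le_entry {N : ℕ} {lam : Fin N → ℕ} (hlam : Antitone lam) (T : SSYT N lam) :
    ∀ (i : ℕ) (hi : i < N) (j : ℕ), j < lam ⟨i, hi⟩ → i ≤ (T.entry ⟨i, hi⟩ j : ℕ) := by
  intro i
  induction i with
  | zero => intros; omega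
  | succ i ih =>
    intro hi j hj
    have hlt : (⟨i, by omega⟩ : Fin N) < ⟨i+1, hi⟩ := by simp
    have h1 := ih (by omega) j (lt_of_lt_of_le hj (hlam hlt.le))
    have h2 := T.colStrict _ _ hlt j hj
    rw [Fin.lt_def] at h2
    omega

def extS {n : ℕ} {lam : Fin (n+1) → ℕ} {m : Fin n → ℕ} (hlam : Antitone lam)
    (hm : m ∈ inter n lam) (T : SSYT n m) : SSYT (n+1) lam where
  entry i j := Fin.lastCases (motive := fun _ => Fin (n+1))
    (if j < lam (Fin.last n) then Fin.last n else 0)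
    (fun i => if j < m i then (T.entry i j).castSucc else
      if j < lam i.castSucc then Fin.last n else 0) i
  rowWeak := by
    intro i j1 j2 h12 h2
    rw [inter, Fintype.mem_piFinset] at hm
    induction i using Fin.lastCases with
    | last => simp [h2, lt_of_le_of_lt h12 h2]
    | cast i =>
      have h1 := lt_of_le_of_lt h12 h2
      simp only [Fin.lastCases_castSucc, h1, h2, if_true]
      by_cases hb : j2 < m i
      · simp only [hb, lt_of_le_of_lt h12 hb, if_true]
        exact Fin.castSucc_le_castSucc_iff.2 (T.rowWeak i j1 j2 h12 hb)
      · simp only [hb, if_false]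
        exact Fin.le_last _
  colStrict := by
    intro i1 i2 h12 j hj
    rw [inter, Fintype.mem_piFinset] at hm
    simp only [mem_Icc] at hm
    induction i1 using Fin.lastCases with
    | last => exact absurd h12 (not_lt.2 (Fin.le_last _))
    | cast i1 =>
      have hj1 : j < m i1 := lt_of_lt_of_le hj ((hlam (Fin.castSucc_lt_iff_succ_le.1 h12)).trans (hm i1).1)
      simp only [Fin.lastCases_castSucc, hj1, if_true]
      induction i2 using Fin.lastCases with
      | last => simp [hj, Fin.castSucc_lt_last]
      | cast i2 =>
        simp only [Fin.lastCases_castSucc, hj, if_true]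
        by_cases h : j < m i2
        · simp only [h, if_true]
          exact Fin.castSucc_lt_castSucc_iff.2 (T.colStrict i1 i2 (Fin.castSucc_lt_castSucc_iff.1 h12) j h)
        · simp only [h, if_false]
          exact Fin.castSucc_lt_last _
  zeroOutside := by
    intro i j hj
    rw [inter, Fintype.mem_piFinset] at hm
    simp only [mem_Icc] at hm
    induction i using Fin.lastCases with
    | last => simp [not_lt.2 hj]
    | cast i =>
      have := (hm i).2
      simp [not_lt.2 hj, not_lt.2 (this.trans hj)]

section
variable {n : ℕ} {lam : Fin (n+1) → ℕ} {m : Fin n → ℕ} (hlam : Antitone lam)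
    (hm : m ∈ inter n lam)

lemma inter_iff : m ∈ inter n lam ↔ ∀ i, lam i.succ ≤ m i ∧ m i ≤ lam i.castSucc := by
  simp [inter, Fintype.mem_piFinset]

lemma extS_lt (T : SSYT n m) (i : Fin n) (j : ℕ) (hj : j < m i) :
    (extS hlam hm T).entry i.castSucc j = (T.entry i j).castSucc := by
  simp [extS, hj]

lemma extS_ge (T : SSYT n m) (i : Fin n) (j : ℕ) (hj : m i ≤ j) (hj2 : j < lam i.castSucc) :
    (extS hlam hm T).entry i.castSucc j = Fin.last n := by
  simp [extS, not_lt.2 hj, hj2]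

lemma extS_last (T : SSYT n m) (j : ℕ) (hj2 : j < lam (Fin.last n)) :
    (extS hlam hm T).entry (Fin.last n) j = Fin.last n := by
  simp [extS, hj2]

lemma mu_extS (T : SSYT n m) : mu (extS hlam hm T) = m := by
  funext i
  have h := (inter_iff.1 hm i).2
  unfold mu
  rw [show (range (lam i.castSucc)).filter (fun j => (extS hlam hm T).entry i.castSucc j ≠ Fin.last n)
    = range (m i) by
      ext j
      simp only [mem_filter, mem_range]
      by_cases hj : j < m i
      · simp [hj, extS_lt hlam hm T i j hj, (lt_of_lt_of_le hj h)]
      · by_cases hj2 : j < lam i.castSucc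
        · simp [hj, extS_ge hlam hm T i j (not_lt.1 hj) hj2]
        · simp [hj, hj2]]
  simp

lemma extS_inj : Function.Injective (extS hlam hm) := by
  intro S T h
  apply ssyt_ext
  intro i j hj
  have := congrArg (fun A => A.entry i.castSucc j) h
  simpa [extS_lt hlam hm _ i j hj] using this

lemma content_castSucc (T : SSYT n m) (k : Fin n) :
    (extS hlam hm T).content k.castSucc = T.content k := by
  unfold SSYT.content
  rw [Fin.sum_univ_castSucc]
  rw [show (range (lam (Fin.last n))).filter
    (fun j => (extS hlam hm T).entry (Fin.last n) j = k.castSucc) = ∅ by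
      apply filter_eq_empty_iff.2
      intro j hj
      rw [extS_last hlam hm T j (mem_range.1 hj)]
      exact (Fin.castSucc_lt_last k).ne']
  rw [card_empty, add_zero]
  refine Finset.sum_congr rfl fun i _ => ?_
  have h := (inter_iff.1 hm i).2
  congr 1
  ext j
  simp only [mem_filter, mem_range]
  by_cases hj : j < m i
  · simp [hj, extS_lt hlam hm T i j hj, (lt_of_lt_of_le hj h)]
  · by_cases hj2 : j < lam i.castSucc
    · simp [hj, extS_ge hlam hm T i j (not_lt.1 hj) hj2, (Fin.castSucc_lt_last k).ne']
    · simp [hj, hj2]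

lemma content_last (T : SSYT n m) :
    (extS hlam hm T).content (Fin.last n) = ∑ i : Fin n, (lam i.castSucc - m i) + lam (Fin.last n) := by
  unfold SSYT.content
  rw [Fin.sum_univ_castSucc]
  rw [show (range (lam (Fin.last n))).filter
    (fun j => (extS hlam hm T).entry (Fin.last n) j = Fin.last n) = range (lam (Fin.last n)) by
      apply filter_true_of_mem
      intro j hj
      rw [extS_last hlam hm T j (mem_range.1 hj)]]
  rw [card_range]
  congr 1
  refine Finset.sum_congr rfl fun i _ => ?_
  have h := (inter_iff.1 hm i).2
  rw [← Nat.card_Ico]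
  congr 1
  ext j
  simp only [mem_filter, mem_range, mem_Ico]
  by_cases hj : j < m i
  · simp [hj, extS_lt hlam hm T i j hj]
  · by_cases hj2 : j < lam i.castSucc
    · simp [extS_ge hlam hm T i j (not_lt.1 hj) hj2, hj2, not_lt.1 hj]
    · simp [hj2]

lemma extS_surj (S : SSYT (n+1) lam) (hS : mu S = m) : ∃ T, extS hlam hm T = S := by
  have hi := inter_iff.1 hm
  have key : ∀ (i : Fin n) (j : ℕ), j < m i → S.entry i.castSucc j ≠ Fin.last n := by
    intro i j hj
    rw [mu_iff S i j (lt_of_lt_of_le hj (hi i).2), hS]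
    exact hj
  let T : SSYT n m :=
    { entry := fun i j => if h : j < m i then (S.entry i.castSucc j).castPred (key i j h) else ⟨0, i.pos⟩
      rowWeak := by
        intro i j1 j2 h12 h2
        simp only [h2, lt_of_le_of_lt h12 h2, dif_pos]
        exact Fin.castPred_le_castPred_iff.2 (S.rowWeak _ _ _ h12 (lt_of_lt_of_le h2 (hi i).2))
      colStrict := by
        intro i1 i2 h12 j hj
        have h12' : i1.castSucc < i2.castSucc := Fin.castSucc_lt_castSucc_iff.2 h12
        have h1 : j < m i1 := lt_of_lt_of_le hj ((hi i2).2.trans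
          ((hlam (Fin.castSucc_lt_iff_succ_le.1 h12')).trans (hi i1).1))
        simp only [hj, h1, dif_pos]
        exact Fin.castPred_lt_castPred_iff.2 (S.colStrict _ _ h12' _ (lt_of_lt_of_le hj (hi i2).2))
      zeroOutside := by
        intro i j hj
        simp [not_lt.2 hj] }
  refine ⟨T, ?_⟩
  apply ssyt_ext
  intro i j hj
  induction i using Fin.lastCases with
  | last =>
    rw [extS_last hlam hm T j hj]
    have := le_entry hlam S n (by omega) j hj
    exact (le_antisymm (Fin.le_last _) this).symm
  | cast i =>
    by_cases h : j < m i
    · rw [extS_lt hlam hm T i j h]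
      simp [T, h]
    · rw [extS_ge hlam hm T i j (not_lt.1 h) hj]
      by_contra hc
      rw [← ne_eq, ne_comm, mu_iff S i j hj, hS] at hc
      exact h hc
end

lemma schF_succ {R : Type*} [CommRing R] (n : ℕ) (lam : Fin (n+1) → ℕ) (hlam : Antitone lam)
    (x : Fin (n+1) → R) :
    schF (n+1) lam x = ∑ m ∈ inter n lam, schF n m (fun j => x j.castSucc) *
      x (Fin.last n) ^ (∑ i : Fin n, (lam i.castSucc - m i) + lam (Fin.last n)) := by
  classical
  unfold schF
  rw [← Finset.sum_fiberwise_of_maps_to (fun T _ => mu_mem hlam T)]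
  refine Finset.sum_congr rfl fun m hm => ?_
  rw [Finset.sum_mul]
  symm
  refine Finset.sum_bij (fun T _ => extS hlam hm T) ?_ ?_ ?_ ?_
  · intro T _
    simp [mu_extS hlam hm T]
  · intro S _ T _ h
    exact extS_inj hlam hm h
  · intro S hS
    obtain ⟨T, hT⟩ := extS_surj hlam hm S (mem_filter.1 hS).2
    exact ⟨T, mem_univ _, hT⟩
  · intro T _
    rw [Fin.prod_univ_castSucc, content_last]
    simp only [content_castSucc]

lemma inter_antitone {n : ℕ} {lam : Fin (n+1) → ℕ} (hlam : Antitone lam) {m : Fin n → ℕ} (hm : m ∈ inter n lam) :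
    Antitone m := by
  intro a b hab
  rcases hab.lt_or_eq with h | rfl
  · have h12' : a.castSucc < b.castSucc := Fin.castSucc_lt_castSucc_iff.2 h
    exact (inter_iff.1 hm b).2.trans ((hlam (Fin.castSucc_lt_iff_succ_le.1 h12')).trans (inter_iff.1 hm a).1)
  · exact le_rfl

lemma strictAnti_add_dlt {N : ℕ} {lam : Fin N → ℕ} (hlam : Antitone lam) :
    StrictAnti (fun i => lam i + dlt N i) := by
  intro a b hab
  have h1 := hlam hab.le
  have h2 : dlt N b < dlt N a := by unfold dlt; omega
  simp only; omega

lemma alt_step2 {R : Type*} [CommRing R] (n : ℕ) (lam : Fin (n+1) → ℕ) (hlam : Antitone lam)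
    (x : Fin (n+1) → R) :
    alt (n+1) (fun i => lam i + dlt (n+1) i) x =
      (∏ j : Fin n, (x j.castSucc - x (Fin.last n))) *
      ∑ m ∈ inter n lam, alt n (fun i => m i + dlt n i) (fun j => x j.castSucc) *
        x (Fin.last n) ^ (∑ i : Fin n, (lam i.castSucc - m i) + lam (Fin.last n)) := by
  rw [alt_step n _ (strictAnti_add_dlt hlam) x, mul_left_comm]
  congr 1
  rw [Finset.mul_sum]
  symm
  have hd1 : ∀ i : Fin n, dlt (n+1) i.castSucc = dlt n i + 1 := by
    intro i; unfold dlt; simp; omega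
  have hd2 : ∀ i : Fin n, dlt (n+1) i.succ = dlt n i := by
    intro i; unfold dlt; simp; omega
  refine Finset.sum_bij (fun m _ => fun i => m i + dlt n i) ?_ ?_ ?_ ?_
  · intro m hm
    rw [Fintype.mem_piFinset]
    intro i
    have := inter_iff.1 hm i
    rw [mem_Ico, hd1, hd2]
    omega
  · intro a _ b _ h
    funext i
    have : a i + dlt n i = b i + dlt n i := congrFun h i
    omega
  · intro b hb
    rw [Fintype.mem_piFinset] at hb
    refine ⟨fun i => b i - dlt n i, ?_, ?_⟩
    · rw [inter_iff]
      intro i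
      have := hb i
      rw [mem_Ico, hd1, hd2] at this
      omega
    · funext i
      have := hb i
      rw [mem_Ico, hd1, hd2] at this
      simp only; omega
  · intro m hm
    have hl : dlt (n+1) (Fin.last n) = 0 := by simp [dlt]
    rw [hl, Finset.prod_pow_eq_pow_sum, ← mul_assoc, ← pow_add, mul_comm, add_zero, add_comm]
    congr 3
    refine Finset.sum_congr rfl fun i _ => ?_
    have := inter_iff.1 hm i
    rw [hd1]; beta_reduce; omega

theorem bialternant {R : Type*} [CommRing R] : ∀ (N : ℕ) (lam : Fin N → ℕ) (_ : Antitone lam) (x : Fin N → R),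
    alt N (dlt N) x * schF N lam x = alt N (fun i => lam i + dlt N i) x := by
  intro N
  induction N with
  | zero =>
    intro lam _ x
    have : Fintype.card (SSYT 0 lam) = 1 := by
      rw [Fintype.card_eq_one_iff]
      exact ⟨⟨fun i => i.elim0, fun i => i.elim0, fun i => i.elim0, fun i => i.elim0⟩,
        fun T => ssyt_ext fun i => i.elim0⟩
    simp [alt, schF, this]
  | succ n ih =>
    intro lam hlam x
    have h0 := alt_step2 n (fun _ => 0) (fun _ _ _ => le_rfl) x
    have h1 : inter n (fun _ => 0) = {fun _ => 0} := by
      ext m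
      rw [inter_iff, mem_singleton]
      constructor
      · intro h; funext i; have := h i; omega
      · rintro rfl; simp
    rw [h1, Finset.sum_singleton] at h0
    simp only [zero_add, Nat.sub_self, Finset.sum_const_zero, pow_zero, mul_one] at h0
    rw [alt_step2 n lam hlam x, show alt (n+1) (dlt (n+1)) x = _ from h0, mul_assoc, schF_succ n lam hlam, Finset.mul_sum]
    congr 1
    refine Finset.sum_congr rfl fun m hm => ?_
    rw [← ih m (inter_antitone hlam hm)]
    rw [show alt n (fun i => dlt n i) (fun j => x j.castSucc) = alt n (dlt n) (fun j => x j.castSucc) from rfl]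
    ring

lemma schF_one_ne {N : ℕ} {lam : Fin N → ℕ} : schF N lam (fun _ => (1:ℂ)) ≠ 0 := by
  unfold schF
  simp only [one_pow, Finset.prod_const_one, Finset.sum_const, nsmul_eq_mul, mul_one]
  have : Nonempty (SSYT N lam) := by
    refine ⟨⟨fun i j => if j < lam i then i else ⟨0, i.pos⟩, ?_, ?_, ?_⟩⟩
    · intro i j1 j2 h h2
      simp [h2, lt_of_le_of_lt h h2]
    · intro i1 i2 h j hj
      simp only [hj, if_true]
      split_ifs
      · exact h
      · rw [Fin.lt_def] at *
        simp only
        omega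
    · intro i j hj
      simp [not_lt.2 hj]
  simp

end SO
open MeasureTheory

namespace SO
open Finset

lemma homog_prod {R ι : Type*} [CommRing R] [DecidableEq ι] (s : Finset ι) (y : ι → R) :
    ∃ c : ℕ → R, ∀ a u : R, ∏ k ∈ s, (a - u * y k) =
      ∑ r ∈ range (s.card + 1), c r * a ^ (s.card - r) * u ^ r := by
  refine ⟨fun r => ∑ t ∈ powersetCard r s, ∏ k ∈ t, (- y k), fun a u => ?_⟩
  have : ∀ k, a - u * y k = (u * (- y k)) + a := by intro k; ring
  simp only [this]
  rw [Finset.prod_add, Finset.sum_powerset]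
  refine Finset.sum_congr rfl fun r _ => ?_
  rw [Finset.sum_mul, Finset.sum_mul]
  refine Finset.sum_congr rfl fun t ht => ?_
  obtain ⟨h1, h2⟩ := mem_powersetCard.1 ht
  rw [Finset.prod_mul_distrib, Finset.prod_const, Finset.prod_const, h2, card_sdiff_of_subset h1, h2]
  ring

lemma alt_dlt {R : Type*} [CommRing R] {N : ℕ} (y : Fin N → R) :
    alt N (dlt N) y = ∏ i : Fin N, ∏ j ∈ Ioi i, (y i - y j) := by
  have := Matrix.det_projVandermonde (fun _ => 1) y
  simp only [one_mul] at this
  rw [← this, ← Matrix.det_transpose]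
  unfold alt
  congr 1
  ext i j
  simp [Matrix.projVandermonde_apply, dlt, Fin.val_rev]
  congr 1
  omega

lemma prod_offdiag {R : Type*} [CommRing R] {N : ℕ} (y : Fin N → R) :
    ∏ j : Fin N, ∏ k ∈ univ.erase j, (y j - y k) =
    (∏ i : Fin N, ∏ j ∈ Ioi i, (y i - y j)) * (∏ i : Fin N, ∏ j ∈ Ioi i, (y j - y i)) := by
  have h : ∀ j : Fin N, (univ.erase j : Finset (Fin N)) = Ioi j ∪ Iio j := by
    intro j; ext k; simp [lt_or_lt_iff_ne, eq_comm]
  have h2 : ∏ j : Fin N, ∏ k ∈ univ.erase j, (y j - y k) =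
      (∏ j : Fin N, ∏ k ∈ Ioi j, (y j - y k)) * (∏ j : Fin N, ∏ k ∈ Iio j, (y j - y k)) := by
    rw [← Finset.prod_mul_distrib]
    refine Finset.prod_congr rfl fun j _ => ?_
    rw [h, Finset.prod_union]
    rw [Finset.disjoint_left]; intro a; simp; exact fun h => h.le
  rw [h2]
  congr 1
  refine Finset.prod_comm' ?_
  intro a b; simp

lemma cauchy_det {R : Type*} [CommRing R] [IsDomain R] {N : ℕ} (u y : Fin N → R)
    (hy : alt N (dlt N) y ≠ 0) :
    Matrix.det (Matrix.of fun i j => ∏ k ∈ univ.erase j, (1 - u i * y k)) =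
      alt N (dlt N) u * alt N (dlt N) y := by
  choose c hc using fun j : Fin N => homog_prod (univ.erase j) y
  have hcard : ∀ j : Fin N, (univ.erase j).card = N - 1 := by
    intro j; simp [card_erase_of_mem]
  let Cm : Matrix (Fin N) (Fin N) R := Matrix.of fun r j => c j (N - 1 - r)
  let Vu : Matrix (Fin N) (Fin N) R := Matrix.of fun i r => u i ^ (N - 1 - (r:ℕ))
  let Wy : Matrix (Fin N) (Fin N) R := Matrix.of fun m r => y m ^ (r:ℕ)
  have e1 : ∀ (j : Fin N) (a b : R), ∏ k ∈ univ.erase j, (a - b * y k) =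
      ∑ r : Fin N, c j (N-1-r) * a ^ (r:ℕ) * b ^ (N-1-(r:ℕ)) := by
    intro j a b
    rw [hc, hcard]
    have hN : N - 1 + 1 = N := by have := j.pos; omega
    rw [hN, ← Finset.sum_range_reflect, Finset.sum_range]
    refine Finset.sum_congr rfl fun r _ => ?_
    congr 3
    omega
  have h1 : (Matrix.of fun i j => ∏ k ∈ univ.erase j, (1 - u i * y k)) = Vu * Cm := by
    ext i j
    rw [Matrix.of_apply, e1, Matrix.mul_apply]
    refine Finset.sum_congr rfl fun r _ => ?_
    simp [Vu, Cm, mul_comm]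
  have h2 : Wy * Cm = Matrix.diagonal (fun j => ∏ k ∈ univ.erase j, (y j - y k)) := by
    ext i j
    rw [Matrix.mul_apply]
    have : ∑ r, Wy i r * Cm r j = ∏ k ∈ univ.erase j, (y i - y k) := by
      have := e1 j (y i) 1
      simp only [one_mul, one_pow, mul_one] at this
      rw [this]
      refine Finset.sum_congr rfl fun r _ => ?_
      simp [Wy, Cm, mul_comm]
    rw [this, Matrix.diagonal_apply]
    split_ifs with h
    · rw [h]
    · apply Finset.prod_eq_zero (i := i)
      · simp [h]
      · simp
  have h3 : Vu.det = alt N (dlt N) u := by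
    unfold alt
    rw [← Matrix.det_transpose]
    rfl
  have h4 : Wy.det = ∏ i : Fin N, ∏ j ∈ Ioi i, (y j - y i) := Matrix.det_vandermonde y
  have h5 : Wy.det ≠ 0 := by
    rw [h4]
    rw [alt_dlt] at hy
    intro h
    apply hy
    rw [Finset.prod_eq_zero_iff] at h ⊢
    obtain ⟨a, ha, h⟩ := h
    refine ⟨a, ha, ?_⟩
    rw [Finset.prod_eq_zero_iff] at h ⊢
    obtain ⟨b, hb, h⟩ := h
    exact ⟨b, hb, by rw [sub_eq_zero] at *; exact h.symm⟩
  have h6 := congrArg Matrix.det h2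
  rw [Matrix.det_mul, Matrix.det_diagonal, prod_offdiag, ← alt_dlt, ← h4, mul_comm] at h6
  have h7 := mul_right_cancel₀ h5 h6
  rw [h1, Matrix.det_mul, h3, h7]

noncomputable def Kd {R : Type*} [CommRing R] {N : ℕ} (d : ℕ) (x y : Fin N → R) : R :=
  ∑ m ∈ finsuppAntidiag (univ : Finset (Fin N × Fin N)) d, ∏ p : Fin N × Fin N, (x p.1 * y p.2) ^ m p

noncomputable def eN (N : ℕ) : ℕ := ∑ i : Fin N, dlt N i

lemma alt_smul {R : Type*} [CommRing R] {N : ℕ} (k : Fin N → ℕ) (t : R) (x : Fin N → R) :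
    alt N k (fun i => t * x i) = t ^ (∑ i, k i) * alt N k x := by
  unfold alt
  rw [← Finset.prod_pow_eq_pow_sum, ← Matrix.det_mul_column]
  congr 1
  ext i j
  simp [mul_pow]

lemma alt_map {R S : Type*} [CommRing R] [CommRing S] (f : R →+* S) {N : ℕ} (k : Fin N → ℕ) (x : Fin N → R) :
    f (alt N k x) = alt N k (fun i => f (x i)) := by
  unfold alt
  rw [RingHom.map_det]
  congr 1
  ext i j
  simp

open PowerSeries in
lemma cauchy {R : Type*} [CommRing R] [IsDomain R] {N : ℕ} (d : ℕ) (x y : Fin N → R)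
    (hy : alt N (dlt N) y ≠ 0) :
    alt N (dlt N) x * alt N (dlt N) y * Kd d x y =
      ∑ l ∈ finsuppAntidiag (univ : Finset (Fin N)) (d + eN N), (∏ i, y i ^ l i) * alt N l x := by
  let g : Fin N → Fin N → R⟦X⟧ := fun i j => PowerSeries.mk fun k => (x i * y j) ^ k
  let q : Fin N → Fin N → R⟦X⟧ := fun i j => 1 - (X * C (x i)) * C (y j)
  have hg : ∀ i j, q i j * g i j = 1 := by
    intro i j
    have : q i j = 1 - C (x i * y j) * X := by simp [q]; ring
    rw [this]
    ext n
    rw [sub_mul, one_mul, map_sub, mul_assoc]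
    cases n with
    | zero => simp [g]
    | succ n =>
      rw [coeff_C_mul, coeff_succ_X_mul]
      simp [g, PowerSeries.coeff_one, pow_succ']
  have hy' : alt N (dlt N) (fun i => C (y i) : Fin N → R⟦X⟧) ≠ 0 := by
    rw [← alt_map]
    intro h
    exact hy (PowerSeries.C_injective (by rw [h, map_zero]))
  have h1 := cauchy_det (fun i => X * C (x i) : Fin N → R⟦X⟧) (fun i => C (y i)) hy'
  rw [alt_smul, ← alt_map, ← alt_map] at h1
  have h2 : Matrix.det (Matrix.of g) = (∏ i, ∏ j, g i j) *
      Matrix.det (Matrix.of fun i j => ∏ k ∈ univ.erase j, q i k) := by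
    rw [← Matrix.det_mul_column]
    congr 1
    refine Matrix.ext fun i j => ?_
    simp only [Matrix.of_apply]
    rw [← Finset.mul_prod_erase univ _ (mem_univ j), mul_assoc, ← Finset.prod_mul_distrib,
      Finset.prod_eq_one, mul_one]
    intro k _
    rw [mul_comm, hg]
  have h3 : Matrix.det (Matrix.of g) = X ^ (eN N) * (C (alt N (dlt N) x * alt N (dlt N) y) *
      ∏ p : Fin N × Fin N, g p.1 p.2) := by
    rw [h2, h1, Fintype.prod_prod_type, map_mul, eN]
    ring
  have h4 : coeff (d + eN N) (Matrix.det (Matrix.of g)) = alt N (dlt N) x * alt N (dlt N) y * Kd d x y := by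
    rw [h3, coeff_X_pow_mul, coeff_C_mul, coeff_prod]
    simp [g, Kd]
  rw [← h4, Matrix.det_apply', map_sum]
  have h5 : ∀ σ : Equiv.Perm (Fin N), coeff (d + eN N) ((((σ.sign : ℤˣ) : ℤ) : R⟦X⟧) * ∏ i, Matrix.of g (σ i) i) =
      ∑ l ∈ finsuppAntidiag (univ : Finset (Fin N)) (d + eN N),
        (∏ i, y i ^ l i) * ((((σ.sign : ℤˣ) : ℤ) : R) * ∏ i, x (σ i) ^ l i) := by
    intro σ
    have : ((((σ.sign : ℤˣ) : ℤ) : R⟦X⟧)) = C ((((σ.sign : ℤˣ) : ℤ) : R)) := by simp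
    rw [this, coeff_C_mul, coeff_prod, Finset.mul_sum]
    refine Finset.sum_congr rfl fun l _ => ?_
    simp only [g, Matrix.of_apply, coeff_mk, mul_pow, Finset.prod_mul_distrib]
    ring
  simp only [h5]
  rw [Finset.sum_comm]
  refine Finset.sum_congr rfl fun l _ => ?_
  rw [← Finset.mul_sum]
  congr 1
  unfold alt
  rw [← Matrix.det_transpose, Matrix.det_apply']
  rfl

end SO
open MeasureTheory

namespace SO
open Finset MvPolynomial

noncomputable abbrev toF {N : ℕ} (k : Fin N → ℕ) : Fin N →₀ ℕ := Finsupp.equivFunOnFinite.symm k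

noncomputable def Vp (N : ℕ) : MvPolynomial (Fin N) ℂ := alt N (dlt N) X
noncomputable def sp (N : ℕ) (lam : Fin N → ℕ) : MvPolynomial (Fin N) ℂ := schF N lam X

def Bd {N : ℕ} {R : Type*} [CommRing R] (p : MvPolynomial (Fin N) R) (k : Fin N →₀ ℕ) : Prop :=
  ∀ m ∈ p.support, toLex m ≤ toLex k

lemma toF_add {N : ℕ} (a b : Fin N → ℕ) : toF (fun i => a i + b i) = toF a + toF b := by
  ext i; simp [toF]

lemma coeff_alt {R : Type*} [CommRing R] {N : ℕ} (k : Fin N → ℕ) (m : Fin N →₀ ℕ) :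
    coeff m (alt N k (X : Fin N → MvPolynomial (Fin N) R)) =
      ∑ σ : Equiv.Perm (Fin N), if toF (fun i => k (σ i)) = m then (((σ.sign : ℤˣ) : ℤ) : R) else 0 := by
  unfold alt
  rw [Matrix.det_apply', coeff_sum]
  refine Finset.sum_congr rfl fun σ _ => ?_
  have : (∏ i, Matrix.of (fun i j => (X j : MvPolynomial (Fin N) R) ^ k i) (σ i) i) =
      monomial (toF (fun i => k (σ i))) 1 := by
    rw [monomial_eq, Finsupp.prod_fintype _ _ (by simp)]
    simp [toF]
  rw [this]
  have h2 : ((((σ.sign : ℤˣ) : ℤ) : MvPolynomial (Fin N) R)) = C ((((σ.sign : ℤˣ) : ℤ) : R)) := by simp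
  rw [h2, coeff_C_mul, coeff_monomial]
  split_ifs <;> simp

lemma perm_le {N : ℕ} (k : Fin N → ℕ) (hk : Antitone k) (σ : Equiv.Perm (Fin N)) :
    toLex (toF (fun i => k (σ i))) ≤ toLex (toF k) := by
  by_contra hc
  rw [not_le] at hc
  obtain ⟨i, h1, h2⟩ := hc
  simp only [toF, ofLex_toLex, Finsupp.coe_equivFunOnFinite_symm] at h1 h2
  let S : Finset (Fin N) := univ.filter fun j => k i < k j
  let S' : Finset (Fin N) := univ.filter fun j => k i < k (σ j)
  have hS : S'.card = S.card := by
    apply Finset.card_bij (fun j _ => σ j)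
    · intro a ha; simpa [S, S'] using ha
    · intro a _ b _ h; exact σ.injective h
    · intro b hb
      exact ⟨σ.symm b, by simpa [S, S'] using hb, by simp⟩
  have hi : i ∉ S := by simp [S]
  have : insert i S ⊆ S' := by
    intro j hj
    rw [mem_insert] at hj
    rcases hj with rfl | hj
    · simpa [S'] using h2
    · simp only [S, mem_filter, mem_univ, true_and, S'] at hj ⊢
      have : j < i := by
        by_contra h
        exact absurd (hk (not_lt.1 h)) (not_le.2 hj)
      rw [← h1 j this]; exact hj
  have h3 := card_le_card this
  rw [card_insert_of_notMem hi] at h3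
  omega

lemma bd_alt {N : ℕ} {R : Type*} [CommRing R] (k : Fin N → ℕ) (hk : Antitone k) :
    Bd (alt N k (X : Fin N → MvPolynomial (Fin N) R)) (toF k) := by
  intro m hm
  rw [mem_support_iff, coeff_alt] at hm
  obtain ⟨σ, _, h⟩ := Finset.exists_ne_zero_of_sum_ne_zero hm
  split_ifs at h with h'
  · rw [← h']; exact perm_le k hk σ
  · exact absurd rfl h

lemma strictAnti_perm {N : ℕ} (k k' : Fin N → ℕ) (hk : StrictAnti k) (hk' : StrictAnti k')
    (σ : Equiv.Perm (Fin N)) (h : ∀ i, k (σ i) = k' i) : σ = 1 := by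
  have : StrictMono σ := by
    intro a b hab
    have := hk' hab
    rw [← h, ← h] at this
    exact hk.lt_iff_gt.1 this
  ext i
  have h2 : (σ : Fin N → Fin N) = id := (this.range_inj strictMono_id).1 (by simp)
  rw [h2]; simp

lemma coeff_alt_strict {R : Type*} [CommRing R] {N : ℕ} (k k' : Fin N → ℕ) (hk : StrictAnti k)
    (hk' : StrictAnti k') :
    coeff (toF k') (alt N k (X : Fin N → MvPolynomial (Fin N) R)) = if k = k' then 1 else 0 := by
  rw [coeff_alt, Finset.sum_eq_single 1]
  · simp
  · intro σ _ hσ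
    rw [if_neg]
    intro h
    exact hσ (strictAnti_perm k k' hk hk' σ fun i => by simpa using DFunLike.congr_fun h i)
  · simp

lemma strictAnti_dlt (N : ℕ) : StrictAnti (dlt N) := by
  have := strictAnti_add_dlt (N := N) (lam := fun _ => 0) (fun _ _ _ => le_rfl)
  simpa using this

lemma alt_X_ne {R : Type*} [CommRing R] [Nontrivial R] (N : ℕ) :
    alt N (dlt N) (X : Fin N → MvPolynomial (Fin N) R) ≠ 0 := by
  intro h
  have := coeff_alt_strict (R := R) (dlt N) (dlt N) (strictAnti_dlt N) (strictAnti_dlt N)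
  rw [h] at this
  simp at this

lemma Bd.mul {N : ℕ} {R : Type*} [CommRing R] {p q : MvPolynomial (Fin N) R} {a b : Fin N →₀ ℕ}
    (hp : Bd p a) (hq : Bd q b) : Bd (p * q) (a + b) := by
  classical
  intro m hm
  have := MvPolynomial.support_mul p q hm
  obtain ⟨u, hu, v, hv, rfl⟩ := Finset.mem_add.1 this
  rw [toLex_add, toLex_add]
  exact add_le_add (hp u hu) (hq v hv)

lemma Bd.coeff_mul {N : ℕ} {R : Type*} [CommRing R] {p q : MvPolynomial (Fin N) R} {a b : Fin N →₀ ℕ}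
    (hp : Bd p a) (hq : Bd q b) : coeff (a + b) (p * q) = coeff a p * coeff b q := by
  classical
  rw [MvPolynomial.coeff_mul, Finset.sum_eq_single (a, b)]
  · rintro ⟨u, v⟩ huv hne
    rw [Finset.HasAntidiagonal.mem_antidiagonal] at huv
    simp only at huv ⊢
    by_contra hc
    have hu : u ∈ p.support := by rw [mem_support_iff]; exact left_ne_zero_of_mul hc
    have hv : v ∈ q.support := by rw [mem_support_iff]; exact right_ne_zero_of_mul hc
    have h1 := hp u hu
    have h2 := hq v hv
    have h3 : toLex u + toLex v = toLex a + toLex b := by rw [← toLex_add, huv, toLex_add]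
    have h4 : toLex u = toLex a := by
      by_contra h
      exact absurd h3 (ne_of_lt (add_lt_add_of_lt_of_le (lt_of_le_of_ne h1 h) h2))
    have h5 : u = a := toLex.injective h4
    subst h5
    have h6 : v = b := add_left_cancel huv
    exact hne (by rw [h6])
  · intro h
    rw [Finset.HasAntidiagonal.mem_antidiagonal] at h
    simp at h

lemma bd_Vp (N : ℕ) : Bd (Vp N) (toF (dlt N)) := bd_alt _ (strictAnti_dlt N).antitone

lemma coeff_Vp_mul {N : ℕ} {p : MvPolynomial (Fin N) ℂ} {k : Fin N →₀ ℕ} (hp : Bd p k) :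
    coeff (k + toF (dlt N)) (Vp N * p) = coeff k p := by
  rw [add_comm, (bd_Vp N).coeff_mul hp, Vp, coeff_alt_strict _ _ (strictAnti_dlt N) (strictAnti_dlt N)]
  simp

lemma coeff_Vp_mul_eq_zero {N : ℕ} {p : MvPolynomial (Fin N) ℂ} {k l : Fin N →₀ ℕ} (hp : Bd p k)
    (h : toLex k < toLex l) : coeff (l + toF (dlt N)) (Vp N * p) = 0 := by
  by_contra hc
  have := (bd_Vp N).mul hp _ (mem_support_iff.2 hc)
  rw [add_comm l, toLex_add, toLex_add] at this
  exact absurd (le_of_add_le_add_left this) (not_le.2 h)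

lemma exists_top {N : ℕ} {p : MvPolynomial (Fin N) ℂ} (hp : p ≠ 0) :
    ∃ k, Bd p k ∧ coeff k p ≠ 0 := by
  obtain ⟨k, hk, h⟩ := Finset.exists_max_image p.support toLex (MvPolynomial.support_nonempty.2 hp)
  exact ⟨k, h, mem_support_iff.1 hk⟩

lemma Vp_mul_sp {N : ℕ} {lam : Fin N → ℕ} (hlam : Antitone lam) :
    Vp N * sp N lam = alt N (fun i => lam i + dlt N i) X := bialternant N lam hlam X

lemma bd_sp {N : ℕ} {lam : Fin N → ℕ} (hlam : Antitone lam) : Bd (sp N lam) (toF lam) := by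
  by_cases h0 : sp N lam = 0
  · intro m hm; simp [h0] at hm
  obtain ⟨k, hk, hk0⟩ := exists_top h0
  rw [← coeff_Vp_mul hk, Vp_mul_sp hlam] at hk0
  have := bd_alt (R := ℂ) _ (strictAnti_add_dlt hlam).antitone _ (mem_support_iff.2 hk0)
  rw [toF_add, toLex_add, toLex_add] at this
  have := le_of_add_le_add_right this
  exact fun m hm => (hk m hm).trans this

lemma top_antitone {N : ℕ} {p : MvPolynomial (Fin N) ℂ} (hs : p.IsSymmetric) {k : Fin N →₀ ℕ}
    (hk : Bd p k) (h0 : coeff k p ≠ 0) : Antitone k := by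
  have := hs.antitone_supDegree
  have h2 : p.supDegree toLex = toLex k := by
    apply le_antisymm
    · exact Finset.sup_le hk
    · exact Finset.le_sup (f := toLex) (mem_support_iff.2 h0)
  rwa [h2] at this

lemma eq_zero_of_coeff {N : ℕ} {p : MvPolynomial (Fin N) ℂ} (hs : p.IsSymmetric)
    (h : ∀ k : Fin N →₀ ℕ, Antitone k → coeff (k + toF (dlt N)) (Vp N * p) = 0) : p = 0 := by
  by_contra h0
  obtain ⟨k, hk, hk0⟩ := exists_top h0
  rw [← coeff_Vp_mul hk] at hk0
  exact hk0 (h k (top_antitone hs hk (by rwa [← coeff_Vp_mul hk])))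

noncomputable def PP (N d : ℕ) : MvPolynomial (Fin N) (MvPolynomial (Fin N) ℂ) :=
  alt N (dlt N) (X : Fin N → MvPolynomial (Fin N) (MvPolynomial (Fin N) ℂ)) *
    Kd d (fun i => (C (X i) : MvPolynomial (Fin N) (MvPolynomial (Fin N) ℂ))) X

noncomputable def bk (N d : ℕ) (k : Fin N →₀ ℕ) : MvPolynomial (Fin N) ℂ := coeff k (PP N d)

lemma Kd_map {R S : Type*} [CommRing R] [CommRing S] (f : R →+* S) {N d : ℕ} (x y : Fin N → R) :
    f (Kd d x y) = Kd d (fun i => f (x i)) (fun i => f (y i)) := by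
  simp [Kd, map_sum, map_prod, map_pow]

lemma Kd_comm {R : Type*} [CommRing R] {N d : ℕ} (x y : Fin N → R) :
    Kd d x y = Kd d y x := by
  unfold Kd
  have key : ∀ m : Fin N × Fin N →₀ ℕ, m ∈ finsuppAntidiag (univ : Finset (Fin N × Fin N)) d →
      m.equivMapDomain (Equiv.prodComm _ _) ∈ finsuppAntidiag (univ : Finset (Fin N × Fin N)) d := by
    intro m hm
    rw [mem_finsuppAntidiag] at hm ⊢
    refine ⟨?_, subset_univ _⟩
    rw [← hm.1]
    exact Fintype.sum_equiv (Equiv.prodComm _ _) _ _ (fun p => by simp [Finsupp.equivMapDomain_apply])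
  refine Finset.sum_bij' (fun m _ => m.equivMapDomain (Equiv.prodComm _ _))
    (fun m _ => m.equivMapDomain (Equiv.prodComm _ _)) key key ?_ ?_ ?_
  · intro m _; ext p; simp [Finsupp.equivMapDomain_apply]
  · intro m _; ext p; simp [Finsupp.equivMapDomain_apply]
  · intro m _
    exact Fintype.prod_equiv (Equiv.prodComm _ _) _ _ (fun p => by
      simp [Finsupp.equivMapDomain_apply, mul_comm])

lemma Kd_perm {R : Type*} [CommRing R] {N d : ℕ} (x y : Fin N → R) (σ : Equiv.Perm (Fin N)) :
    Kd d (fun i => x (σ i)) y = Kd d x y := by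
  unfold Kd
  let e : Fin N × Fin N ≃ Fin N × Fin N := Equiv.prodCongr σ (Equiv.refl _)
  have key : ∀ (e : Fin N × Fin N ≃ Fin N × Fin N) (m : Fin N × Fin N →₀ ℕ), m ∈ finsuppAntidiag (univ : Finset (Fin N × Fin N)) d →
      m.equivMapDomain e ∈ finsuppAntidiag (univ : Finset (Fin N × Fin N)) d := by
    intro e m hm
    rw [mem_finsuppAntidiag] at hm ⊢
    refine ⟨?_, subset_univ _⟩
    rw [← hm.1]
    exact (Fintype.sum_equiv e _ _ (fun p => by simp [Finsupp.equivMapDomain_apply])).symm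
  refine Finset.sum_bij' (fun m _ => m.equivMapDomain e)
    (fun m _ => m.equivMapDomain e.symm) (key e) (key e.symm) ?_ ?_ ?_
  · intro m _; ext p; simp [Finsupp.equivMapDomain_apply]
  · intro m _; ext p; simp [Finsupp.equivMapDomain_apply]
  · intro m _
    exact Fintype.prod_equiv e _ _ (fun p => by
      rw [Finsupp.equivMapDomain_apply, Equiv.symm_apply_apply]; rfl)

lemma bk_symm (N d : ℕ) (k : Fin N →₀ ℕ) : (bk N d k).IsSymmetric := by
  intro σ
  have h : map (rename σ).toRingHom (PP N d) = PP N d := by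
    unfold PP
    let f : MvPolynomial (Fin N) (MvPolynomial (Fin N) ℂ) →+* _ :=
      map (σ := Fin N) (rename (R := ℂ) σ).toRingHom
    have h1 := alt_map f (dlt N) X
    have h2 := Kd_map f (d := d) (fun i => (C (X i) : MvPolynomial (Fin N) (MvPolynomial (Fin N) ℂ))) X
    have h3 := Kd_perm (d := d) (fun i => (C (X i) : MvPolynomial (Fin N) (MvPolynomial (Fin N) ℂ))) X σ
    rw [map_mul, h1, h2, ← h3]
    simp [f]
  unfold bk
  conv_rhs => rw [← h, coeff_map]
  rfl

lemma PP_eq (N d : ℕ) : C (Vp N) * PP N d =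
    ∑ l ∈ finsuppAntidiag (univ : Finset (Fin N)) (d + eN N), monomial l (alt N l X) := by
  have := cauchy d (fun i => C (X i)) (X : Fin N → MvPolynomial (Fin N) (MvPolynomial (Fin N) ℂ))
    (alt_X_ne N)
  have hC : ∀ k, alt N k (fun i => (C (X i) : MvPolynomial (Fin N) (MvPolynomial (Fin N) ℂ))) = C (alt N k X) :=
    fun k => (alt_map (C : MvPolynomial (Fin N) ℂ →+* MvPolynomial (Fin N) (MvPolynomial (Fin N) ℂ)) k X).symm
  rw [hC, mul_assoc] at this
  unfold PP Vp
  rw [this]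
  refine Finset.sum_congr rfl fun l _ => ?_
  rw [hC, monomial_eq, Finsupp.prod_fintype _ _ (by simp), mul_comm]

lemma Vp_mul_bk (N d : ℕ) (k : Fin N →₀ ℕ) : Vp N * bk N d k =
    if ∑ i, k i = d + eN N then alt N k X else 0 := by
  unfold bk
  rw [← coeff_C_mul, PP_eq, coeff_sum]
  simp only [coeff_monomial]
  rw [Finset.sum_ite_eq']
  simp [mem_finsuppAntidiag]

lemma bk_eq_zero {N d : ℕ} {k : Fin N →₀ ℕ} (h : ∑ i, k i ≠ d + eN N) : bk N d k = 0 := by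
  have := Vp_mul_bk N d k
  rw [if_neg h] at this
  exact (mul_eq_zero.1 this).resolve_left (alt_X_ne N)

lemma bk_eq_sp {N d : ℕ} {lam : Fin N → ℕ} (hlam : Antitone lam) (h : ∑ i, lam i = d) :
    bk N d (toF lam + toF (dlt N)) = sp N lam := by
  have h1 := Vp_mul_bk N d (toF lam + toF (dlt N))
  rw [if_pos] at h1
  · apply mul_left_cancel₀ (alt_X_ne (R := ℂ) N)
    refine h1.trans ((Vp_mul_sp hlam).trans ?_).symm
    rfl
  · simp [Finset.sum_add_distrib, h, eN, toF]

lemma sp_symm {N : ℕ} {lam : Fin N → ℕ} (hlam : Antitone lam) : (sp N lam).IsSymmetric := by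
  rw [← bk_eq_sp hlam rfl]; exact bk_symm _ _ _

lemma eval_sp {N : ℕ} {lam : Fin N → ℕ} (x : Fin N → ℂ) : eval x (sp N lam) = schF N lam x := by
  simp [sp, schF, map_sum, map_prod]

lemma eval_Kd {N d : ℕ} (a y : Fin N → ℂ) :
    eval y (Vp N) * Kd d a y = ∑ k ∈ (PP N d).support, eval a (bk N d k) * ∏ i, y i ^ k i := by
  have h : eval y (map (eval a) (PP N d)) = eval y (Vp N) * Kd d a y := by
    unfold PP Vp
    let f : MvPolynomial (Fin N) (MvPolynomial (Fin N) ℂ) →+* ℂ := (eval y).comp (map (eval a))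
    have h1 := alt_map f (dlt N) X
    have h2 := Kd_map f (d := d) (fun i => (C (X i) : MvPolynomial (Fin N) (MvPolynomial (Fin N) ℂ))) X
    have h3 := alt_map (eval y : MvPolynomial (Fin N) ℂ →+* ℂ) (dlt N) X
    have h4 : ∀ z, f z = eval y (map (eval a) z) := fun z => rfl
    rw [h3, ← h4, map_mul, h1, h2]
    simp [f]
  rw [← h, eval_map, eval₂_eq']
  rfl

end SO
open MeasureTheory

namespace SO
open Finset MvPolynomial

abbrev GU (N : ℕ) := Matrix.unitaryGroup (Fin N) ℂ
abbrev Mt (N : ℕ) := Matrix (Fin N) (Fin N) ℂ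
abbrev CC (N : ℕ) := C(GU N, ℂ)

instance borelMt (N : ℕ) : BorelSpace (Mt N) := ⟨rfl⟩
instance borelGU (N : ℕ) : BorelSpace (GU N) := Subtype.borelSpace _

instance compactGU (N : ℕ) : CompactSpace (GU N) := by
  apply isCompact_iff_compactSpace.1
  have hc : IsClosed ((Matrix.unitaryGroup (Fin N) ℂ : Submonoid (Mt N)) : Set (Mt N)) := by
    have : ((Matrix.unitaryGroup (Fin N) ℂ : Submonoid (Mt N)) : Set (Mt N)) =
        {A : Mt N | star A * A = 1} := by
      ext A; exact Matrix.mem_unitaryGroup_iff'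
    rw [this]
    exact isClosed_eq (by fun_prop) continuous_const
  have hK : IsCompact (Set.univ.pi fun _ : Fin N => Set.univ.pi fun _ : Fin N =>
      Metric.closedBall (0 : ℂ) 1) :=
    isCompact_univ_pi fun _ => isCompact_univ_pi fun _ => isCompact_closedBall 0 1
  refine IsCompact.of_isClosed_subset hK hc ?_
  intro A hA i _ j _
  simpa using entry_norm_bound_of_unitary hA i j

lemma integrable_CC {N : ℕ} (m : Measure (GU N)) [m.IsHaarMeasure] (f : CC N) : Integrable f m :=
  f.continuous.integrable_of_hasCompactSupport (HasCompactSupport.of_compactSpace _)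

lemma integral_left {N : ℕ} (m : Measure (GU N)) [m.IsHaarMeasure] (f : GU N → ℂ) (Y : GU N) :
    ∫ U, f (Y * U) ∂m = ∫ U, f U ∂m := integral_mul_left_eq_self f Y

noncomputable def ell {N : ℕ} (m : Measure (GU N)) (f : CC N) : ℂ := ∫ U, f U ∂m

noncomputable def Int {N : ℕ} {σ : Type*} (m : Measure (GU N)) (P : MvPolynomial σ (CC N)) :
    MvPolynomial σ ℂ := ∑ k ∈ P.support, monomial k (ell m (coeff k P))

lemma coeff_Int {N : ℕ} {σ : Type*} (m : Measure (GU N)) (P : MvPolynomial σ (CC N)) (k : σ →₀ ℕ) :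
    coeff k (Int m P) = ell m (coeff k P) := by
  classical
  unfold Int
  rw [coeff_sum]
  simp only [coeff_monomial]
  rw [Finset.sum_ite_eq']
  split_ifs with h
  · rfl
  · rw [notMem_support_iff.1 h]; simp [ell]

/-- evaluation at a group element and a point -/
noncomputable def EU {N : ℕ} {σ : Type*} (U : GU N) (x : σ → ℂ) : MvPolynomial σ (CC N) →ₐ[ℂ] ℂ :=
  { eval₂Hom (ContinuousMap.evalAlgHom ℂ ℂ U).toRingHom x with
    commutes' := by
      intro c
      have : algebraMap ℂ (MvPolynomial σ (CC N)) c = C (algebraMap ℂ (CC N) c) := rfl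
      simp [this] }

lemma EU_apply {N : ℕ} {σ : Type*} [Fintype σ] (U : GU N) (x : σ → ℂ) (P : MvPolynomial σ (CC N)) :
    EU U x P = ∑ k ∈ P.support, coeff k P U * ∏ i, x i ^ k i := by
  change eval₂ _ x P = _
  rw [eval₂_eq']; rfl

@[simp] lemma EU_X {N : ℕ} {σ : Type*} (U : GU N) (x : σ → ℂ) (i : σ) : EU U x (X i) = x i := by
  change eval₂ _ x (X i) = _
  simp

@[simp] lemma EU_C {N : ℕ} {σ : Type*} (U : GU N) (x : σ → ℂ) (f : CC N) : EU U x (C f) = f U := by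
  change eval₂ _ x (C f) = _
  simp

lemma eval_Int {N : ℕ} {σ : Type*} [Fintype σ] (m : Measure (GU N)) [m.IsHaarMeasure]
    (P : MvPolynomial σ (CC N)) (x : σ → ℂ) :
    eval x (Int m P) = ∫ U, EU U x P ∂m := by
  simp_rw [EU_apply]
  rw [integral_finsetSum _ (fun k _ => (integrable_CC m _).mul_const _)]
  unfold Int
  rw [map_sum]
  refine Finset.sum_congr rfl fun k _ => ?_
  rw [eval_monomial, Finsupp.prod_fintype _ _ (by simp), integral_mul_const]; rfl

lemma Bd_Int {N : ℕ} (m : Measure (GU N)) {P : MvPolynomial (Fin N) (CC N)} {k : Fin N →₀ ℕ}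
    (h : Bd P k) : Bd (Int m P) k := by
  intro j hj
  apply h
  rw [mem_support_iff] at hj ⊢
  intro h0
  rw [coeff_Int, h0] at hj
  simp [ell] at hj

/-- polynomial on matrices evaluated over an algebra -/
noncomputable def pm {N : ℕ} {R : Type*} [CommRing R] [Algebra ℂ R] (p : MvPolynomial (Fin N × Fin N) ℂ)
    (M : Matrix (Fin N) (Fin N) R) : R := aeval (fun ij : Fin N × Fin N => M ij.1 ij.2) p

lemma pm_map {N : ℕ} {R S : Type*} [CommRing R] [Algebra ℂ R] [CommRing S] [Algebra ℂ S]
    (f : R →ₐ[ℂ] S) (p : MvPolynomial (Fin N × Fin N) ℂ) (M : Matrix (Fin N) (Fin N) R) :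
    f (pm p M) = pm p (M.map f) := by
  unfold pm
  rw [← AlgHom.comp_apply, comp_aeval]; rfl

lemma pm_eval {N : ℕ} (p : MvPolynomial (Fin N × Fin N) ℂ) (M : Mt N) :
    pm p M = eval (fun ij : Fin N × Fin N => M ij.1 ij.2) p := by
  unfold pm; rw [aeval_eq_eval]

noncomputable def Zu {N : ℕ} (V U : GU N) : Mt N := (U : Mt N) * V * star (U : Mt N)

noncomputable def Zg {N : ℕ} (V : GU N) : Matrix (Fin N) (Fin N) (CC N) :=
  Matrix.of fun i j => ⟨fun U => Zu V U i j, by unfold Zu; fun_prop⟩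

lemma Zu_mul {N : ℕ} (V Y U : GU N) : Zu V (Y * U) = Y * Zu V U * star (Y : Mt N) := by
  simp [Zu, mul_assoc]

/-- generic product of matrices over MvPolynomial σ CC, with constant matrices -/
noncomputable def mC {N : ℕ} {σ : Type*} (A : Mt N) : Matrix (Fin N) (Fin N) (MvPolynomial σ (CC N)) :=
  A.map (algebraMap ℂ _)

noncomputable def mZ {N : ℕ} {σ : Type*} (V : GU N) : Matrix (Fin N) (Fin N) (MvPolynomial σ (CC N)) :=
  (Zg V).map C

noncomputable def mX {N : ℕ} (R : Type*) [CommRing R] : Matrix (Fin N) (Fin N) (MvPolynomial (Fin N × Fin N) R) :=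
  Matrix.of fun i j => X (i, j)

lemma mC_EU {N : ℕ} {σ : Type*} (A : Mt N) (U : GU N) (x : σ → ℂ) : (mC A).map (EU U x) = A := by
  ext i j
  change EU U x (algebraMap ℂ _ (A i j)) = _
  rw [AlgHom.commutes]; rfl

lemma mZ_EU {N : ℕ} {σ : Type*} (V : GU N) (U : GU N) (x : σ → ℂ) : (mZ V).map (EU U x) = Zu V U := by
  ext i j
  simp [mZ, Zg]

lemma mX_EU {N : ℕ} (U : GU N) (Y : Mt N) :
    (mX (CC N)).map (EU U (fun ij : Fin N × Fin N => Y ij.1 ij.2)) = Y := by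
  ext i j
  simp [mX]

end SO
open MeasureTheory

namespace SO
open Finset MvPolynomial

lemma sphere_inf : (Metric.sphere (0:ℂ) 1).Infinite := by
  have h : (1 : Cardinal) < Module.rank ℝ ℂ := by rw [Complex.rank_real_complex]; norm_num
  refine (isPreconnected_sphere h 0 1).infinite_of_nontrivial ⟨1, by simp, -1, by simp, ?_⟩
  norm_num

lemma herm_diag {N : ℕ} {A : Mt N} (hA : A.IsHermitian) : ∃ (S : GU N) (x : Fin N → ℂ),
    A = (S : Mt N) * Matrix.diagonal x * star (S : Mt N) := by
  refine ⟨hA.eigenvectorUnitary, RCLike.ofReal ∘ hA.eigenvalues, ?_⟩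
  conv_lhs => rw [hA.spectral_theorem]
  rfl

lemma lemH {N : ℕ} (P : MvPolynomial (Fin N × Fin N) ℂ)
    (h : ∀ (S : GU N) (x : Fin N → ℂ), pm P ((S : Mt N) * Matrix.diagonal x * star (S : Mt N)) = 0)
    (M : Mt N) : pm P M = 0 := by
  let A : Mt N := (1/2 : ℂ) • (M + star M)
  let B : Mt N := (-Complex.I/2 : ℂ) • (M - star M)
  have hA : A.IsHermitian := by
    ext i j
    simp [A, Matrix.star_apply]; ring
  have hB : B.IsHermitian := by
    ext i j
    simp [B, Matrix.star_apply]; ring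
  have hM : M = A + Complex.I • B := by
    ext i j
    simp [A, B, Matrix.star_apply]
    ring_nf
    simp; ring
  let r : Polynomial ℂ := aeval (fun ij : Fin N × Fin N =>
    Polynomial.C (A ij.1 ij.2) + Polynomial.X * Polynomial.C (B ij.1 ij.2)) P
  have hr : ∀ t : ℂ, r.eval t = pm P (A + t • B) := by
    intro t
    have : r.eval t = Polynomial.aeval t r := by simp
    rw [this]
    simp only [r]
    rw [← AlgHom.comp_apply, comp_aeval]
    unfold pm
    congr 2
    ext ij
    simp
    exact mul_comm _ _
  have hr0 : r = 0 := by
    apply Polynomial.eq_zero_of_infinite_isRoot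
    apply (Set.infinite_range_of_injective Complex.ofReal_injective).mono
    rintro _ ⟨t, rfl⟩
    change r.eval _ = 0
    rw [hr]
    have : (A + (t:ℂ) • B).IsHermitian := by
      apply hA.add
      unfold Matrix.IsHermitian at hB ⊢
      rw [Matrix.conjTranspose_smul, hB]; simp
    obtain ⟨S, x, hx⟩ := herm_diag this
    rw [hx]; exact h S x
  have := hr Complex.I
  rw [hr0, ← hM] at this
  simpa using this.symm

lemma lemUn {N : ℕ} (P : MvPolynomial (Fin N × Fin N) ℂ)
    (h : ∀ (S : GU N), pm P (S : Mt N) = 0) (M : Mt N) : pm P M = 0 := by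
  apply lemH
  intro S x
  let Q : Matrix (Fin N) (Fin N) (MvPolynomial (Fin N) ℂ) :=
    (S : Mt N).map C * Matrix.diagonal X * (star (S : Mt N)).map C
  have hQ : ∀ z : Fin N → ℂ, Q.map (aeval z : MvPolynomial (Fin N) ℂ →ₐ[ℂ] ℂ) =
      (S : Mt N) * Matrix.diagonal z * star (S : Mt N) := by
    intro z
    simp only [Q, Matrix.map_mul]
    congr 1
    · congr 1
      · ext i j; simp
      · ext i j; simp [Matrix.diagonal_apply]; split_ifs <;> simp
    · ext i j; simp
  have h2 : pm P Q = 0 := by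
    apply MvPolynomial.funext_set (fun _ => Metric.sphere (0:ℂ) 1) (fun _ => sphere_inf)
    intro z hz
    rw [map_zero]
    have e1 : eval z (pm P Q) = aeval z (pm P Q) := by rw [aeval_eq_eval]
    rw [e1, pm_map, hQ]
    have : Matrix.diagonal z ∈ Matrix.unitaryGroup (Fin N) ℂ := by
      rw [Matrix.mem_unitaryGroup_iff, Matrix.star_eq_conjTranspose, Matrix.diagonal_conjTranspose, Matrix.diagonal_mul_diagonal]
      rw [← Matrix.diagonal_one]
      congr 1
      ext i
      have : ‖z i‖ = 1 := by simpa using hz i (Set.mem_univ _)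
      simp [Complex.mul_conj, Complex.normSq_eq_norm_sq, this]
    have h5 : (S : Mt N) * Matrix.diagonal z * star (S : Mt N) ∈ Matrix.unitaryGroup (Fin N) ℂ :=
      mul_mem (mul_mem S.2 this) (star S).2
    exact h ⟨_, h5⟩
  have := congrArg (aeval x : MvPolynomial (Fin N) ℂ →ₐ[ℂ] ℂ) h2
  rwa [pm_map, hQ, map_zero] at this

/-- (*) -/
lemma star_comm {N : ℕ} (m : Measure (GU N)) [m.IsHaarMeasure] (V : GU N)
    (p : MvPolynomial (Fin N × Fin N) ℂ) (Y : Mt N) :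
    ∫ U, pm p (Zu V U * Y) ∂m = ∫ U, pm p (Y * Zu V U) ∂m := by
  let P1 : MvPolynomial (Fin N × Fin N) (CC N) := pm p (mZ V * mX (CC N))
  let P2 : MvPolynomial (Fin N × Fin N) (CC N) := pm p (mX (CC N) * mZ V)
  have h1 : ∀ Y : Mt N, pm (Int m P1) Y = ∫ U, pm p (Zu V U * Y) ∂m := by
    intro Y
    rw [pm_eval, eval_Int]
    congr 1; ext U
    simp only [P1]
    rw [pm_map, Matrix.map_mul, mZ_EU, mX_EU]
  have h2 : ∀ Y : Mt N, pm (Int m P2) Y = ∫ U, pm p (Y * Zu V U) ∂m := by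
    intro Y
    rw [pm_eval, eval_Int]
    congr 1; ext U
    simp only [P2]
    rw [pm_map, Matrix.map_mul, mZ_EU, mX_EU]
  have h3 : ∀ Y : Mt N, pm (Int m P1 - Int m P2) Y = pm (Int m P1) Y - pm (Int m P2) Y := by
    intro Y; simp [pm]
  rw [← h1, ← h2, ← sub_eq_zero, ← h3]
  apply lemUn
  intro S
  rw [h3, h1, h2, sub_eq_zero, ← integral_left m _ S]
  congr 1; ext U
  rw [Zu_mul, mul_assoc]
  have : star (S : Mt N) * S = 1 := Matrix.mem_unitaryGroup_iff'.1 S.2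
  rw [this, mul_one]

end SO
open MeasureTheory

namespace SO
open Finset MvPolynomial

noncomputable def eigs {N : ℕ} (M : Mt N) : Fin N → ℂ := fun i => M.charpoly.roots.toList.getD (i : ℕ) 0

lemma card_roots_charpoly {N : ℕ} (M : Mt N) : Multiset.card M.charpoly.roots = N := by
  have := (IsAlgClosed.splits M.charpoly).natDegree_eq_card_roots
  rw [← this, Matrix.charpoly_natDegree_eq_dim]; simp

lemma map_eigs {N : ℕ} (M : Mt N) : M.charpoly.roots = (univ : Finset (Fin N)).val.map (eigs M) := by
  rw [Fin.univ_val_map]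
  conv_lhs => rw [← Multiset.coe_toList M.charpoly.roots]
  congr 1
  have hl : M.charpoly.roots.toList.length = N := by rw [Multiset.length_toList, card_roots_charpoly]
  apply List.ext_getElem
  · rw [hl]; simp
  · intro n h1 h2
    simp [eigs]
    rw [List.getElem?_eq_getElem h1]; rfl

noncomputable def er {N : ℕ} {R : Type*} [CommRing R] (i : Fin N) (M : Matrix (Fin N) (Fin N) R) : R :=
  (-1) ^ (i.1 + 1) * M.charpoly.coeff (N - (i.1 + 1))

lemma er_map {N : ℕ} {R S : Type*} [CommRing R] [CommRing S] (f : R →+* S) (i : Fin N)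
    (M : Matrix (Fin N) (Fin N) R) : f (er i M) = er i (M.map f) := by
  simp [er, Matrix.charpoly_map]

lemma er_eq {N : ℕ} (i : Fin N) (M : Mt N) (x : Fin N → ℂ)
    (h : M.charpoly.roots = (univ : Finset (Fin N)).val.map x) :
    er i M = eval x (esymm (Fin N) ℂ (i.1 + 1)) := by
  have hd : M.charpoly.natDegree = N := by rw [Matrix.charpoly_natDegree_eq_dim]; simp
  have h1 := Polynomial.coeff_eq_esymm_roots_of_card (p := M.charpoly)
    (by rw [card_roots_charpoly, hd]) (k := N - (i.1 + 1)) (by rw [hd]; omega)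
  rw [hd, (Matrix.charpoly_monic M).leadingCoeff, one_mul, Nat.sub_sub_self (by omega)] at h1
  unfold er
  rw [h1, ← mul_assoc, ← mul_pow, h, ← aeval_esymm_eq_multiset_esymm (Fin N) ℂ, aeval_eq_eval]
  simp

lemma roots_diag {N : ℕ} (x : Fin N → ℂ) :
    (Matrix.diagonal x).charpoly.roots = (univ : Finset (Fin N)).val.map x := by
  have : (Matrix.diagonal x).charpoly = ((univ : Finset (Fin N)).val.map x |>.map fun a => Polynomial.X - Polynomial.C a).prod := by
    rw [Matrix.charpoly_diagonal, Multiset.map_map]; rfl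
  rw [this, Polynomial.roots_multiset_prod_X_sub_C]

noncomputable def sm {N : ℕ} {R : Type*} [CommRing R] [Algebra ℂ R] (Q : MvPolynomial (Fin N) ℂ)
    (M : Matrix (Fin N) (Fin N) R) : R := aeval (fun i => er i M) Q

lemma sm_map {N : ℕ} {R S : Type*} [CommRing R] [Algebra ℂ R] [CommRing S] [Algebra ℂ S]
    (f : R →ₐ[ℂ] S) (Q : MvPolynomial (Fin N) ℂ) (M : Matrix (Fin N) (Fin N) R) :
    f (sm Q M) = sm Q (M.map f) := by
  unfold sm
  rw [← AlgHom.comp_apply, comp_aeval]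
  congr 2
  ext i
  exact er_map f.toRingHom i M

noncomputable def ev {N : ℕ} (s : MvPolynomial (Fin N) ℂ) (M : Mt N) : ℂ := eval (eigs M) s

noncomputable def eQ {N : ℕ} (Q : MvPolynomial (Fin N) ℂ) : MvPolynomial (Fin N) ℂ :=
  aeval (fun i : Fin N => esymm (Fin N) ℂ (i.1 + 1)) Q

lemma sm_eq {N : ℕ} (Q : MvPolynomial (Fin N) ℂ) (M : Mt N) (x : Fin N → ℂ)
    (h : M.charpoly.roots = (univ : Finset (Fin N)).val.map x) : sm Q M = eval x (eQ Q) := by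
  unfold eQ sm
  have : eval x ((aeval fun i : Fin N => esymm (Fin N) ℂ (i.1 + 1)) Q) =
    aeval x ((aeval fun i : Fin N => esymm (Fin N) ℂ (i.1 + 1)) Q) := by rw [aeval_eq_eval]
  rw [this, ← AlgHom.comp_apply, comp_aeval]
  congr 2
  ext i
  rw [er_eq i M x h, aeval_eq_eval]

lemma exists_Q {N : ℕ} {s : MvPolynomial (Fin N) ℂ} (hs : s.IsSymmetric) : ∃ Q, eQ Q = s := by
  obtain ⟨Q, hQ⟩ := (esymmAlgHom_fin_bijective ℂ N).2 ⟨s, hs⟩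
  refine ⟨Q, ?_⟩
  have := esymmAlgHom_apply (σ := Fin N) Q
  rw [hQ] at this
  exact this.symm

lemma sm_ev {N : ℕ} (Q : MvPolynomial (Fin N) ℂ) (M : Mt N) : sm Q M = ev (eQ Q) M :=
  sm_eq Q M _ (map_eigs M)

lemma ev_diag {N : ℕ} {s : MvPolynomial (Fin N) ℂ} (hs : s.IsSymmetric) (x : Fin N → ℂ) :
    ev s (Matrix.diagonal x) = eval x s := by
  obtain ⟨Q, rfl⟩ := exists_Q hs
  rw [← sm_ev, sm_eq Q _ x (roots_diag x)]

lemma ev_mul_comm {N : ℕ} (s : MvPolynomial (Fin N) ℂ) (A B : Mt N) : ev s (A * B) = ev s (B * A) := by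
  unfold ev eigs; rw [Matrix.charpoly_mul_comm]

lemma ev_conj {N : ℕ} (s : MvPolynomial (Fin N) ℂ) (S : GU N) (A : Mt N) :
    ev s ((S : Mt N) * A * star (S : Mt N)) = ev s A := by
  rw [mul_assoc, ev_mul_comm, mul_assoc]
  have : star (S : Mt N) * S = 1 := Matrix.mem_unitaryGroup_iff'.1 S.2
  rw [this, mul_one]

noncomputable def pQ {N : ℕ} (Q : MvPolynomial (Fin N) ℂ) : MvPolynomial (Fin N × Fin N) ℂ := sm Q (mX ℂ)

lemma pm_pQ {N : ℕ} (Q : MvPolynomial (Fin N) ℂ) (M : Mt N) : pm (pQ Q) M = ev (eQ Q) M := by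
  rw [← sm_ev]
  unfold pm pQ
  rw [sm_map]
  congr 1
  ext i j
  simp [mX]

lemma exists_pm {N : ℕ} {s : MvPolynomial (Fin N) ℂ} (hs : s.IsSymmetric) :
    ∃ p : MvPolynomial (Fin N × Fin N) ℂ, ∀ M : Mt N, pm p M = ev s M := by
  obtain ⟨Q, rfl⟩ := exists_Q hs
  exact ⟨pQ Q, pm_pQ Q⟩

/-! bounds -/

noncomputable def acc {N : ℕ} (t : Fin N →₀ ℕ) : Fin N →₀ ℕ := toF (Fin.accumulate N N t)

lemma acc_inj {N : ℕ} : Function.Injective (acc (N := N)) := by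
  intro a b h
  have h1 := Finsupp.equivFunOnFinite.symm.injective h
  exact DFunLike.coe_injective (Fin.accumulate_injective le_rfl h1)

lemma acc_add {N : ℕ} (a b : Fin N →₀ ℕ) : acc (a + b) = acc a + acc b := by
  unfold acc
  rw [Finsupp.coe_add, map_add]
  exact toF_add _ _

lemma acc_zero {N : ℕ} : acc (0 : Fin N →₀ ℕ) = 0 := by
  ext i; simp [acc]

lemma supDeg_mono {N : ℕ} {r : ℂ} (hr : r ≠ 0) (t : Fin N →₀ ℕ) :
    (esymmAlgHomMonomial (Fin N) t r).supDegree toLex = toLex (acc t) := by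
  have := supDegree_esymmAlgHomMonomial (R := ℂ) hr t (le_refl N)
  apply ofLex.injective
  ext i
  rw [this]; simp [acc]

lemma bd_mono {N : ℕ} {r : ℂ} (hr : r ≠ 0) (t : Fin N →₀ ℕ) :
    Bd (esymmAlgHomMonomial (Fin N) t r) (acc t) := by
  intro m hm
  rw [← supDeg_mono hr t]
  exact Finset.le_sup (f := toLex) hm

lemma coeff_mono {N : ℕ} {r : ℂ} (hr : r ≠ 0) (t : Fin N →₀ ℕ) :
    coeff (acc t) (esymmAlgHomMonomial (Fin N) t r) = r := by
  have := leadingCoeff_esymmAlgHomMonomial (R := ℂ) (r := r) t (le_refl N)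
  rw [leadingCoeff_toLex, supDeg_mono hr t] at this
  exact this

lemma acc_le {N : ℕ} {Q : MvPolynomial (Fin N) ℂ} {k : Fin N →₀ ℕ} (h : Bd (eQ Q) k) :
    ∀ t ∈ Q.support, toLex (acc t) ≤ toLex k := by
  by_cases hne : Q.support.Nonempty
  swap
  · intro t ht; exact absurd ⟨t, ht⟩ hne
  obtain ⟨t0, ht0, hmax⟩ := Finset.exists_max_image Q.support (fun t => toLex (acc t)) hne
  have key : coeff (acc t0) (eQ Q) = coeff t0 Q := by
    have : eQ Q = ∑ t ∈ Q.support, esymmAlgHomMonomial (Fin N) t (coeff t Q) := by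
      conv_lhs => rw [Q.as_sum]
      unfold eQ
      rw [map_sum]
      refine Finset.sum_congr rfl fun t _ => ?_
      rw [esymmAlgHomMonomial, esymmAlgHom_apply]
    rw [this, coeff_sum, Finset.sum_eq_single t0]
    · exact coeff_mono (mem_support_iff.1 ht0) _
    · intro t ht hne
      by_contra hc
      have h1 := bd_mono (mem_support_iff.1 ht) t _ (mem_support_iff.2 hc)
      have h2 := hmax t ht
      exact hne (acc_inj (toLex.injective (le_antisymm h2 h1)))
    · exact fun h => absurd ht0 h
  have h0 : toLex (acc t0) ≤ toLex k := h _ (by rw [mem_support_iff, key]; exact mem_support_iff.1 ht0)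
  exact fun t ht => (hmax t ht).trans h0

lemma Bd.sum {N : ℕ} {R ι : Type*} [CommRing R] (s : Finset ι) (f : ι → MvPolynomial (Fin N) R)
    {k : Fin N →₀ ℕ} (h : ∀ i ∈ s, Bd (f i) k) : Bd (∑ i ∈ s, f i) k := by
  intro m hm
  rw [mem_support_iff, coeff_sum] at hm
  obtain ⟨i, hi, h'⟩ := Finset.exists_ne_zero_of_sum_ne_zero hm
  exact h i hi m (mem_support_iff.2 h')

lemma Bd.C {N : ℕ} {R : Type*} [CommRing R] (r : R) : Bd (MvPolynomial.C r : MvPolynomial (Fin N) R) 0 := by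
  intro m hm
  rw [mem_support_iff, coeff_C] at hm
  split_ifs at hm with h
  · rw [← h]
  · exact absurd rfl hm

lemma Bd.C_mul {N : ℕ} {R : Type*} [CommRing R] (r : R) {p : MvPolynomial (Fin N) R} {k : Fin N →₀ ℕ}
    (h : Bd p k) : Bd (MvPolynomial.C r * p) k := by
  have := (Bd.C r).mul h
  rwa [zero_add] at this

lemma Bd.pow_acc {N : ℕ} {R : Type*} [CommRing R] {p : MvPolynomial (Fin N) R} {i : Fin N}
    (h : Bd p (acc (Finsupp.single i 1))) (n : ℕ) : Bd (p ^ n) (acc (Finsupp.single i n)) := by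
  induction n with
  | zero => simpa [acc_zero] using Bd.C (N := N) (1 : R)
  | succ n ih =>
    rw [pow_succ, Finsupp.single_add, acc_add]
    exact ih.mul h

lemma Bd.prod_acc {N : ℕ} {R : Type*} [CommRing R] (e : Fin N → MvPolynomial (Fin N) R)
    (h : ∀ i, Bd (e i) (acc (Finsupp.single i 1))) (t : Fin N →₀ ℕ) :
    Bd (∏ i, e i ^ t i) (acc t) := by
  induction t using Finsupp.induction_linear with
  | zero => simpa [acc_zero] using Bd.C (N := N) (1 : R)
  | add a b ha hb =>
    have : (∏ i, e i ^ (a + b) i) = (∏ i, e i ^ a i) * ∏ i, e i ^ b i := by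
      rw [← Finset.prod_mul_distrib]; simp [pow_add]
    rw [this, acc_add]; exact ha.mul hb
  | single j n =>
    rw [Finset.prod_eq_single j]
    · simpa using (h j).pow_acc n
    · intro i _ hi; simp [hi.symm]
    · simp

lemma bd_set {N : ℕ} (i : Fin N) (S : Finset (Fin N)) (hS : S.card = i.1 + 1) :
    toLex (∑ j ∈ S, Finsupp.single j 1) ≤ toLex (acc (Finsupp.single i 1)) := by
  have h1 : (∑ j ∈ S, Finsupp.single j 1) ∈ (esymm (Fin N) ℂ (i.1 + 1)).support := by
    rw [support_esymm]
    exact Finset.mem_image.2 ⟨S, by simp [hS], rfl⟩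
  have h2 := bd_mono (one_ne_zero (α := ℂ)) (Finsupp.single i 1)
  rw [esymmAlgHomMonomial_single_one, pow_one] at h2
  exact h2 _ h1

lemma bd_er {N : ℕ} {R : Type*} [CommRing R] (A : Matrix (Fin N) (Fin N) R) (i : Fin N) :
    Bd (er i (A.map MvPolynomial.C * Matrix.diagonal X)) (acc (Finsupp.single i 1)) := by
  have key : (A.map MvPolynomial.C * Matrix.diagonal X : Matrix (Fin N) (Fin N) (MvPolynomial (Fin N) R)).charpoly =
      ∑ σ : Equiv.Perm (Fin N), ∑ S : Finset (Fin N), Polynomial.C (MvPolynomial.C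
        (((((σ.sign : ℤˣ) : ℤ) : R)) * ((∏ j ∈ S, - A (σ j) j) * ∏ j ∈ Sᶜ, if σ j = j then 1 else 0)) *
          monomial (∑ j ∈ S, Finsupp.single j 1) 1) * Polynomial.X ^ (Sᶜ).card := by
    rw [Matrix.charpoly, Matrix.det_apply']
    refine Finset.sum_congr rfl fun σ _ => ?_
    have h1 : ∀ j, (A.map MvPolynomial.C * Matrix.diagonal X : Matrix (Fin N) (Fin N) (MvPolynomial (Fin N) R)).charmatrix (σ j) j =
        Polynomial.C (MvPolynomial.C (- A (σ j) j)) * Polynomial.C (X j) +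
          Polynomial.C (MvPolynomial.C (if σ j = j then 1 else 0)) * Polynomial.X := by
      intro j
      rw [Matrix.charmatrix_apply, Matrix.mul_diagonal, Matrix.diagonal_apply]
      split_ifs <;> simp <;> ring
    simp_rw [h1]
    rw [Finset.prod_add, Finset.mul_sum, Finset.powerset_univ]
    refine Finset.sum_congr rfl fun S _ => ?_
    have h2 : (monomial (∑ j ∈ S, Finsupp.single j 1) 1 : MvPolynomial (Fin N) R) = ∏ j ∈ S, X j := by
      rw [monomial_sum_one]; rfl
    rw [h2, Finset.prod_mul_distrib, Finset.prod_mul_distrib, ← Finset.compl_eq_univ_sdiff]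
    simp only [map_mul, map_prod, Finset.prod_const, map_intCast]
    ring
  unfold er
  have hpow : ((-1 : MvPolynomial (Fin N) R) ^ (i.1 + 1)) = MvPolynomial.C ((-1) ^ (i.1 + 1)) := by simp
  rw [hpow]
  apply Bd.C_mul
  rw [key, Polynomial.finsetSum_coeff]
  apply Bd.sum
  intro σ _
  rw [Polynomial.finsetSum_coeff]
  apply Bd.sum
  intro S _
  rw [Polynomial.coeff_C_mul_X_pow]
  split_ifs with h
  · apply Bd.C_mul
    intro m hm
    have hm' := support_monomial_subset hm
    rw [Finset.mem_singleton] at hm'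
    rw [hm']
    apply bd_set
    rw [Finset.card_compl, Fintype.card_fin] at h
    have := S.card_le_univ
    rw [Fintype.card_fin] at this
    omega
  · intro m hm; simp at hm

lemma bd_sm {N : ℕ} {R : Type*} [CommRing R] [Algebra ℂ R] (A : Matrix (Fin N) (Fin N) R)
    {Q : MvPolynomial (Fin N) ℂ} {k : Fin N →₀ ℕ} (h : Bd (eQ Q) k) :
    Bd (sm Q (A.map MvPolynomial.C * Matrix.diagonal X)) k := by
  unfold sm
  rw [aeval_def, eval₂_eq']
  apply Bd.sum
  intro t ht
  have h1 := Bd.prod_acc _ (bd_er A) t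
  have h2 : Bd (∏ i, er i (A.map MvPolynomial.C * Matrix.diagonal X) ^ t i) k :=
    fun m hm => (h1 m hm).trans (acc_le h t ht)
  exact Bd.C_mul (algebraMap ℂ R (coeff t Q)) h2

/-- L2 -/
lemma exists_q {N : ℕ} (m : Measure (GU N)) [m.IsHaarMeasure] (V : GU N)
    {s : MvPolynomial (Fin N) ℂ} (hs : s.IsSymmetric) :
    ∃ q : MvPolynomial (Fin N) ℂ, (∀ x, eval x q = ∫ U, ev s (Zu V U * Matrix.diagonal x) ∂m) ∧
      ∀ k, Bd s k → Bd q k := by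
  obtain ⟨Q, rfl⟩ := exists_Q hs
  refine ⟨Int m (sm Q (mZ V * Matrix.diagonal X)), ?_, ?_⟩
  · intro x
    rw [eval_Int]
    congr 1; ext U
    rw [sm_map, Matrix.map_mul, mZ_EU, sm_ev]
    congr 2
    ext i j
    simp [Matrix.diagonal_apply]
    split_ifs <;> simp
  · intro k hk
    exact Bd_Int m (bd_sm _ hk)

end SO
open MeasureTheory

namespace SO
open Finset MvPolynomial

noncomputable def AXB {N : ℕ} {R : Type*} [CommRing R] (A B : Matrix (Fin N) (Fin N) R) :
    Matrix (Fin N) (Fin N) (MvPolynomial (Fin N × Fin N) R) := A.map C * mX R * B.map C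

noncomputable def tau {N : ℕ} {R : Type*} [CommRing R] [Algebra ℂ R] (d : ℕ)
    (A B : Matrix (Fin N) (Fin N) R) : R :=
  ∑ m ∈ finsuppAntidiag (univ : Finset (Fin N × Fin N)) d, coeff m (pm (monomial m 1) (AXB A B))

lemma AXB_map {N : ℕ} {R S : Type*} [CommRing R] [CommRing S] (f : R →+* S)
    (A B : Matrix (Fin N) (Fin N) R) : (AXB A B).map (map f) = AXB (A.map f) (B.map f) := by
  unfold AXB
  rw [Matrix.map_mul, Matrix.map_mul]
  congr 1
  · congr 1
    · ext i j : 2; simp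
    · ext i j : 2; simp [mX]
  · ext i j : 2; simp

lemma coeff_pm_map {N : ℕ} {R S : Type*} [CommRing R] [Algebra ℂ R] [CommRing S] [Algebra ℂ S]
    (f : R →ₐ[ℂ] S) (p : MvPolynomial (Fin N × Fin N) ℂ) (m : Fin N × Fin N →₀ ℕ)
    (A B : Matrix (Fin N) (Fin N) R) :
    f (coeff m (pm p (AXB A B))) = coeff m (pm p (AXB (A.map f) (B.map f))) := by
  have h1 : f (coeff m (pm p (AXB A B))) = coeff m (map f.toRingHom (pm p (AXB A B))) := by
    rw [coeff_map]; rfl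
  have h2 : map f.toRingHom (pm p (AXB A B)) = mapAlgHom f (pm p (AXB A B)) := rfl
  rw [h1, h2, pm_map]
  have h3 := AXB_map f.toRingHom A B
  congr 2

lemma tau_map {N : ℕ} {R S : Type*} [CommRing R] [Algebra ℂ R] [CommRing S] [Algebra ℂ S]
    (f : R →ₐ[ℂ] S) (d : ℕ) (A B : Matrix (Fin N) (Fin N) R) :
    f (tau d A B) = tau d (A.map f) (B.map f) := by
  unfold tau
  rw [map_sum]
  exact Finset.sum_congr rfl fun m _ => coeff_pm_map f _ m A B

lemma mem_fa {ι : Type*} [Fintype ι] [DecidableEq ι] (d : ℕ) (m : ι →₀ ℕ) :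
    m ∈ finsuppAntidiag (univ : Finset ι) d ↔ ∑ i, m i = d := by
  simp [mem_finsuppAntidiag]

lemma trace_comm {ι : Type*} [Fintype ι] [DecidableEq ι] (d : ℕ)
    (φ ψ : MvPolynomial ι ℂ →ₗ[ℂ] MvPolynomial ι ℂ)
    (hφ : ∀ m, ∑ i, m i = d → (φ (monomial m 1)).IsHomogeneous d)
    (hψ : ∀ m, ∑ i, m i = d → (ψ (monomial m 1)).IsHomogeneous d) :
    ∑ m ∈ finsuppAntidiag (univ : Finset ι) d, coeff m (φ (ψ (monomial m 1))) =
    ∑ m ∈ finsuppAntidiag (univ : Finset ι) d, coeff m (ψ (φ (monomial m 1))) := by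
  have key : ∀ (φ ψ : MvPolynomial ι ℂ →ₗ[ℂ] MvPolynomial ι ℂ),
      (∀ m, ∑ i, m i = d → (ψ (monomial m 1)).IsHomogeneous d) →
      ∀ m ∈ finsuppAntidiag (univ : Finset ι) d, coeff m (φ (ψ (monomial m 1))) =
        ∑ m' ∈ finsuppAntidiag (univ : Finset ι) d,
          coeff m' (ψ (monomial m 1)) * coeff m (φ (monomial m' 1)) := by
    intro φ ψ hψ m hm
    have h1 : ψ (monomial m 1) = ∑ m' ∈ finsuppAntidiag (univ : Finset ι) d,
        coeff m' (ψ (monomial m 1)) • monomial m' 1 := by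
      ext k
      rw [coeff_sum]
      simp only [coeff_smul, coeff_monomial, smul_eq_mul, mul_ite, mul_one, mul_zero]
      rw [Finset.sum_ite_eq']
      split_ifs with h
      · rfl
      · by_contra hc
        have := hψ m ((mem_fa _ _).1 hm) hc
        apply h
        rw [mem_fa, ← this]
        simp [Finsupp.weight_apply, Finsupp.sum_fintype]
    conv_lhs => rw [h1]
    rw [map_sum, coeff_sum]
    refine Finset.sum_congr rfl fun m' _ => ?_
    rw [map_smul, coeff_smul, smul_eq_mul]
  rw [Finset.sum_congr rfl (key φ ψ hψ), Finset.sum_congr rfl (key ψ φ hφ), Finset.sum_comm]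
  refine Finset.sum_congr rfl fun m _ => Finset.sum_congr rfl fun m' _ => mul_comm _ _

noncomputable def ph {N : ℕ} (A B : Mt N) :
    MvPolynomial (Fin N × Fin N) ℂ →ₐ[ℂ] MvPolynomial (Fin N × Fin N) ℂ :=
  aeval (fun p : Fin N × Fin N => AXB A B p.1 p.2)

lemma ph_hom {N : ℕ} (A B : Mt N) (d : ℕ) (m : Fin N × Fin N →₀ ℕ) (h : ∑ i, m i = d) :
    (ph A B (monomial m 1)).IsHomogeneous d := by
  unfold ph
  rw [aeval_monomial, map_one, one_mul, Finsupp.prod_fintype _ _ (by simp), ← h]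
  apply IsHomogeneous.prod
  intro p _
  have : (AXB A B p.1 p.2).IsHomogeneous 1 := by
    unfold AXB
    rw [Matrix.mul_apply]
    apply IsHomogeneous.sum
    intro j _
    rw [Matrix.mul_apply, Finset.sum_mul]
    apply IsHomogeneous.sum
    intro i _
    have := ((isHomogeneous_C (Fin N × Fin N) (A p.1 i)).mul (isHomogeneous_X ℂ (i, j))).mul
      (isHomogeneous_C (Fin N × Fin N) (B j p.2))
    simpa [mX] using this
  simpa using this.pow (m p)

lemma ph_comp {N : ℕ} (A B A' B' : Mt N) (f) : ph A B (ph A' B' f) = ph (A' * A) (B * B') f := by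
  have : (ph A B).comp (ph A' B') = ph (A' * A) (B * B') := by
    apply MvPolynomial.algHom_ext
    intro p
    have h1 : (AXB A' B').map (ph A B) = AXB (A' * A) (B * B') := by
      have hC : ∀ A' : Mt N, (A'.map (C : ℂ →+* MvPolynomial (Fin N × Fin N) ℂ)).map (ph A B) = A'.map C := by
        intro A'; ext i j : 2
        simp [ph]
      have hX : (mX ℂ).map (ph A B) = AXB A B := by
        ext i j : 2
        simp [ph, mX]
      conv_lhs => unfold AXB
      rw [Matrix.map_mul, Matrix.map_mul, hC, hC, hX]
      unfold AXB
      rw [Matrix.map_mul, Matrix.map_mul]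
      simp only [Matrix.mul_assoc]
    have h2 : ∀ (A B : Mt N), ph A B (X p) = AXB A B p.1 p.2 := by intro A B; simp [ph]
    rw [AlgHom.comp_apply, h2, h2, ← h1]; rfl
  rw [← this]; rfl

lemma tau_ph {N : ℕ} (d : ℕ) (A B : Mt N) : tau d A B =
    ∑ m ∈ finsuppAntidiag (univ : Finset (Fin N × Fin N)) d, coeff m (ph A B (monomial m 1)) := rfl

lemma tau_comm_left {N : ℕ} (d : ℕ) (A A' B : Mt N) : tau d (A * A') B = tau d (A' * A) B := by
  have := trace_comm d (ph A' 1).toLinearMap (ph A B).toLinearMap (ph_hom A' 1 d) (ph_hom A B d)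
  simp only [AlgHom.toLinearMap_apply, ph_comp, one_mul, mul_one] at this
  exact this

lemma tau_comm_right {N : ℕ} (d : ℕ) (A B B' : Mt N) : tau d A (B * B') = tau d A (B' * B) := by
  have := trace_comm d (ph 1 B).toLinearMap (ph A B').toLinearMap (ph_hom 1 B d) (ph_hom A B' d)
  simp only [AlgHom.toLinearMap_apply, ph_comp, one_mul, mul_one] at this
  exact this

lemma tau_diag {N : ℕ} (d : ℕ) (x y : Fin N → ℂ) :
    tau d (Matrix.diagonal x) (Matrix.diagonal y) = Kd d x y := by
  unfold tau Kd
  refine Finset.sum_congr rfl fun m _ => ?_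
  have h : ∀ p : Fin N × Fin N, AXB (Matrix.diagonal x) (Matrix.diagonal y) p.1 p.2 =
      C (x p.1 * y p.2) * X p := by
    intro p
    unfold AXB
    rw [Matrix.diagonal_map (map_zero _), Matrix.diagonal_map (map_zero _), Matrix.mul_diagonal, Matrix.diagonal_mul]
    simp [mX]; ring
  unfold pm
  rw [aeval_monomial, map_one, one_mul, Finsupp.prod_fintype _ _ (by simp)]
  have h2 : (∏ p, AXB (Matrix.diagonal x) (Matrix.diagonal y) p.1 p.2 ^ m p) =
      monomial m (∏ p : Fin N × Fin N, (x p.1 * y p.2) ^ m p) := by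
    rw [monomial_eq, Finsupp.prod_fintype _ _ (by simp), map_prod, ← Finset.prod_mul_distrib]
    refine Finset.prod_congr rfl fun p _ => ?_
    rw [h, mul_pow, map_pow]
  rw [h2, coeff_monomial, if_pos rfl]

lemma eq_ev {N : ℕ} (F : Mt N → ℂ) (p : MvPolynomial (Fin N × Fin N) ℂ) (hp : ∀ M, pm p M = F M)
    (hc : ∀ A B, F (A * B) = F (B * A)) {s : MvPolynomial (Fin N) ℂ} (hs : s.IsSymmetric)
    (hd : ∀ x, F (Matrix.diagonal x) = eval x s) (M : Mt N) : F M = ev s M := by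
  obtain ⟨q, hq⟩ := exists_pm hs
  have h3 : ∀ Y : Mt N, pm (p - q) Y = F Y - ev s Y := by
    intro Y; rw [← hp, ← hq]; simp [pm]
  rw [← sub_eq_zero, ← h3]
  apply lemH
  intro S x
  rw [h3, ev_conj, ev_diag hs, mul_assoc, hc, mul_assoc, Matrix.mem_unitaryGroup_iff'.1 S.2, mul_one, hd, sub_self]

lemma mX_aeval {N : ℕ} (M : Mt N) :
    (mX ℂ).map (aeval (fun ij : Fin N × Fin N => M ij.1 ij.2) : MvPolynomial (Fin N × Fin N) ℂ →ₐ[ℂ] ℂ) = M := by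
  ext i j; simp [mX]

lemma mC_aeval {N : ℕ} (M B : Mt N) :
    (B.map C).map (aeval (fun ij : Fin N × Fin N => M ij.1 ij.2) : MvPolynomial (Fin N × Fin N) ℂ →ₐ[ℂ] ℂ) = B := by
  ext i j; simp

noncomputable def Ks {N : ℕ} (d : ℕ) (y : Fin N → ℂ) : MvPolynomial (Fin N) ℂ :=
  Kd d X (fun i => C (y i))

lemma eval_Ks {N : ℕ} (d : ℕ) (x y : Fin N → ℂ) : eval x (Ks d y) = Kd d x y := by
  unfold Ks; rw [Kd_map]; simp

lemma Ks_symm {N : ℕ} (d : ℕ) (y : Fin N → ℂ) : (Ks d y).IsSymmetric := by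
  intro σ
  unfold Ks
  have := Kd_map (rename (R := ℂ) σ).toRingHom (d := d) X (fun i => C (y i))
  refine this.trans ?_
  rw [← Kd_perm X _ σ]
  simp

lemma tau_left {N : ℕ} (d : ℕ) (M : Mt N) (y : Fin N → ℂ) :
    tau d M (Matrix.diagonal y) = Kd d (eigs M) y := by
  have := eq_ev (fun M => tau d M (Matrix.diagonal y)) (tau d (mX ℂ) ((Matrix.diagonal y).map C))
    (fun M => by unfold pm; rw [tau_map, mX_aeval, mC_aeval])
    (fun A B => tau_comm_left d A B _) (Ks_symm d y)
    (fun x => by rw [tau_diag, eval_Ks]) M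
  rw [ev, eval_Ks] at this
  exact this

lemma tau_right {N : ℕ} (d : ℕ) (M : Mt N) (x : Fin N → ℂ) :
    tau d (Matrix.diagonal x) M = Kd d x (eigs M) := by
  have := eq_ev (fun M => tau d (Matrix.diagonal x) M) (tau d ((Matrix.diagonal x).map C) (mX ℂ))
    (fun M => by unfold pm; rw [tau_map, mX_aeval, mC_aeval])
    (fun A B => tau_comm_right d _ A B) (Ks_symm d x)
    (fun y => by rw [tau_diag, eval_Ks, Kd_comm]) M
  rw [ev, eval_Ks, Kd_comm] at this
  exact this

noncomputable def cA {N : ℕ} (A : Mt N) : Matrix (Fin N) (Fin N) (CC N) := A.map (algebraMap ℂ (CC N))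

lemma cA_ev {N : ℕ} (U : GU N) (A : Mt N) : (cA A).map (ContinuousMap.evalAlgHom ℂ ℂ U) = A := by
  ext i j; simp [cA]

lemma Zg_ev {N : ℕ} (V U : GU N) : (Zg V).map (ContinuousMap.evalAlgHom ℂ ℂ U) = Zu V U := by
  ext i j; simp [Zg]

lemma cA_EU {N : ℕ} {σ : Type*} (x : σ → ℂ) (U : GU N) (A : Mt N) : ((cA A).map C).map (EU U x) = A := by
  ext i j; simp [cA]

lemma Zg_EU {N : ℕ} {σ : Type*} (x : σ → ℂ) (V U : GU N) : ((Zg V).map C).map (EU U x) = Zu V U := by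
  ext i j; simp [Zg]

lemma mX_EU2 {N : ℕ} (x : Fin N × Fin N → ℂ) (U : GU N) :
    (mX (CC N)).map (EU U x) = Matrix.of fun i j => x (i, j) := by
  ext i j; simp [mX]

lemma ce1 {N : ℕ} (V : GU N) (A B : Mt N) (p : MvPolynomial (Fin N × Fin N) ℂ)
    (k : Fin N × Fin N →₀ ℕ) (U : GU N) :
    coeff k (pm p (AXB (Zu V U * A) B)) = coeff k (pm p (AXB (Zg V * cA A) (cA B))) U := by
  have := coeff_pm_map (ContinuousMap.evalAlgHom ℂ ℂ U) p k (Zg V * cA A) (cA B)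
  rw [Matrix.map_mul, cA_ev, cA_ev, Zg_ev] at this
  exact this.symm

lemma ce2 {N : ℕ} (V : GU N) (A B : Mt N) (p : MvPolynomial (Fin N × Fin N) ℂ)
    (k : Fin N × Fin N →₀ ℕ) (U : GU N) :
    coeff k (pm p (AXB A (B * Zu V U))) = coeff k (pm p (AXB (cA A) (cA B * Zg V))) U := by
  have := coeff_pm_map (ContinuousMap.evalAlgHom ℂ ℂ U) p k (cA A) (cA B * Zg V)
  rw [Matrix.map_mul, cA_ev, cA_ev, Zg_ev] at this
  exact this.symm

lemma cf1 {N : ℕ} (V : GU N) (A B : Mt N) (p : MvPolynomial (Fin N × Fin N) ℂ)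
    (x : Fin N × Fin N → ℂ) (U : GU N) :
    EU U x (pm p (AXB (Zg V * cA A) (cA B))) = pm p (Zu V U * (A * (Matrix.of fun i j => x (i, j)) * B)) := by
  unfold AXB
  rw [pm_map, Matrix.map_mul, Matrix.map_mul, Matrix.map_mul, Matrix.map_mul, mX_EU2, cA_EU, cA_EU, Zg_EU]
  simp only [mul_assoc]

lemma cf2 {N : ℕ} (V : GU N) (A B : Mt N) (p : MvPolynomial (Fin N × Fin N) ℂ)
    (x : Fin N × Fin N → ℂ) (U : GU N) :
    EU U x (pm p (AXB (cA A) (cA B * Zg V))) = pm p ((A * (Matrix.of fun i j => x (i, j)) * B) * Zu V U) := by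
  unfold AXB
  rw [pm_map, Matrix.map_mul, Matrix.map_mul, Matrix.map_mul, Matrix.map_mul, mX_EU2, cA_EU, cA_EU, Zg_EU]
  simp only [mul_assoc]

lemma coeff_integral {N : ℕ} (m : Measure (GU N)) [m.IsHaarMeasure] (V : GU N) (A B : Mt N)
    (k : Fin N × Fin N →₀ ℕ) :
    Integrable (fun U => coeff k (pm (monomial k 1) (AXB (Zu V U * A) B))) m ∧
    Integrable (fun U => coeff k (pm (monomial k 1) (AXB A (B * Zu V U)))) m ∧
    ∫ U, coeff k (pm (monomial k 1) (AXB (Zu V U * A) B)) ∂m =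
      ∫ U, coeff k (pm (monomial k 1) (AXB A (B * Zu V U))) ∂m := by
  simp_rw [ce1, ce2]
  refine ⟨integrable_CC m _, integrable_CC m _, ?_⟩
  have : Int m (pm (monomial k 1) (AXB (Zg V * cA A) (cA B))) =
      Int m (pm (monomial k 1) (AXB (cA A) (cA B * Zg V))) := by
    apply MvPolynomial.funext
    intro x
    rw [eval_Int, eval_Int]
    simp_rw [cf1, cf2]
    exact star_comm m V _ _
  have h := congrArg (coeff k) this
  rw [coeff_Int, coeff_Int] at h
  exact h

lemma tau_integral {N : ℕ} (m : Measure (GU N)) [m.IsHaarMeasure] (V : GU N) (A B : Mt N) (d : ℕ) :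
    ∫ U, tau d (Zu V U * A) B ∂m = ∫ U, tau d A (B * Zu V U) ∂m := by
  unfold tau
  rw [integral_finsetSum _ fun k _ => (coeff_integral m V A B k).1,
    integral_finsetSum _ fun k _ => (coeff_integral m V A B k).2.1]
  exact Finset.sum_congr rfl fun k _ => (coeff_integral m V A B k).2.2

lemma Kd_integral {N : ℕ} (m : Measure (GU N)) [m.IsHaarMeasure] (V : GU N) (x y : Fin N → ℂ) (d : ℕ) :
    ∫ U, Kd d (eigs (Zu V U * Matrix.diagonal x)) y ∂m =
      ∫ U, Kd d (eigs (Zu V U * Matrix.diagonal y)) x ∂m := by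
  have := tau_integral m V (Matrix.diagonal x) (Matrix.diagonal y) d
  simp_rw [tau_left, tau_right] at this
  rw [this]
  congr 1; ext U
  rw [Kd_comm]
  unfold eigs
  rw [Matrix.charpoly_mul_comm]

end SO
open MeasureTheory

namespace SO
open Finset MvPolynomial

lemma integrable_ev {N : ℕ} (m : Measure (GU N)) [m.IsHaarMeasure] (V : GU N)
    {s : MvPolynomial (Fin N) ℂ} (hs : s.IsSymmetric) (W : Mt N) :
    Integrable (fun U => ev s (Zu V U * W)) m := by
  obtain ⟨p, hp⟩ := exists_pm hs
  simp_rw [← hp, pm_eval]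
  have hc : Continuous fun U : GU N => eval (fun ij : Fin N × Fin N => (Zu V U * W) ij.1 ij.2) p := by
    have h1 : Continuous fun U : GU N => Zu V U * W := by unfold Zu; fun_prop
    refine (MvPolynomial.continuous_eval p).comp (continuous_pi fun ij => ?_)
    exact h1.matrix_elem ij.1 ij.2
  exact integrable_CC m ⟨_, hc⟩

lemma conj_int {N : ℕ} (m : Measure (GU N)) [m.IsHaarMeasure] (V : GU N)
    (s : MvPolynomial (Fin N) ℂ) (S : GU N) (W : Mt N) :
    ∫ U, ev s (Zu V U * ((S : Mt N) * W * star (S : Mt N))) ∂m = ∫ U, ev s (Zu V U * W) ∂m := by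
  refine (integral_left m (fun U => ev s (Zu V U * ((S : Mt N) * W * star (S : Mt N)))) S).symm.trans ?_
  refine integral_congr_ae (Filter.Eventually.of_forall fun U => ?_)
  change ev s (Zu V (S * U) * ((S : Mt N) * W * star (S : Mt N))) = ev s (Zu V U * W)
  have h : star (S : Mt N) * S = 1 := Matrix.mem_unitaryGroup_iff'.1 S.2
  have : Zu V (S * U) * ((S : Mt N) * W * star (S : Mt N)) =
      (S : Mt N) * (Zu V U * W) * star (S : Mt N) := by
    rw [Zu_mul]
    calc _ = (S : Mt N) * Zu V U * (star (S : Mt N) * S) * W * star (S : Mt N) := by simp only [mul_assoc]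
      _ = _ := by rw [h, mul_one]; simp only [mul_assoc]
  rw [this, ev_conj]

lemma perm_diag {N : ℕ} (σ : Equiv.Perm (Fin N)) (x : Fin N → ℂ) : ∃ S : GU N,
    Matrix.diagonal (fun i => x (σ i)) = (S : Mt N) * Matrix.diagonal x * star (S : Mt N) := by
  let S : Mt N := Matrix.of fun i j => if σ i = j then 1 else 0
  have hS : S ∈ Matrix.unitaryGroup (Fin N) ℂ := by
    rw [Matrix.mem_unitaryGroup_iff]
    ext i j
    simp [S, Matrix.mul_apply, Matrix.one_apply, Matrix.star_apply, eq_comm]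
  refine ⟨⟨S, hS⟩, ?_⟩
  ext i j
  simp [S, Matrix.mul_apply, Matrix.diagonal_apply, Matrix.star_apply, eq_comm]
  by_cases h : i = j
  · rw [if_pos h, if_pos h, h]
  · rw [if_neg h, if_neg h]

noncomputable def qk {N : ℕ} (m : Measure (GU N)) [m.IsHaarMeasure] (V : GU N) (d : ℕ)
    (k : Fin N →₀ ℕ) : MvPolynomial (Fin N) ℂ := (exists_q m V (bk_symm N d k)).choose

lemma eval_qk {N : ℕ} (m : Measure (GU N)) [m.IsHaarMeasure] (V : GU N) (d : ℕ)
    (k : Fin N →₀ ℕ) (x : Fin N → ℂ) :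
    eval x (qk m V d k) = ∫ U, ev (bk N d k) (Zu V U * Matrix.diagonal x) ∂m :=
  (exists_q m V (bk_symm N d k)).choose_spec.1 x

lemma bd_qk {N : ℕ} (m : Measure (GU N)) [m.IsHaarMeasure] (V : GU N) (d : ℕ)
    (k l : Fin N →₀ ℕ) (h : Bd (bk N d k) l) : Bd (qk m V d k) l :=
  (exists_q m V (bk_symm N d k)).choose_spec.2 l h

lemma qk_symm {N : ℕ} (m : Measure (GU N)) [m.IsHaarMeasure] (V : GU N) (d : ℕ)
    (k : Fin N →₀ ℕ) : (qk m V d k).IsSymmetric := by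
  intro σ
  apply MvPolynomial.funext
  intro x
  rw [eval_rename, eval_qk, eval_qk]
  obtain ⟨S, hS⟩ := perm_diag σ x
  have : (x ∘ σ) = fun i => x (σ i) := rfl
  rw [this, hS, conj_int]

lemma qk_zero {N : ℕ} (m : Measure (GU N)) [m.IsHaarMeasure] (V : GU N) (d : ℕ)
    (k : Fin N →₀ ℕ) (h : bk N d k = 0) : qk m V d k = 0 := by
  apply MvPolynomial.funext
  intro x
  rw [eval_qk, h]; simp [ev]

lemma sum_qk {N : ℕ} (m : Measure (GU N)) [m.IsHaarMeasure] (V : GU N) (d : ℕ) (x y : Fin N → ℂ) :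
    ∑ k ∈ (PP N d).support, eval x (Vp N * qk m V d k) * ∏ i, y i ^ k i =
      eval x (Vp N) * eval y (Vp N) * ∫ U, Kd d (eigs (Zu V U * Matrix.diagonal x)) y ∂m := by
  have h1 : eval y (Vp N) * ∫ U, Kd d (eigs (Zu V U * Matrix.diagonal x)) y ∂m =
      ∑ k ∈ (PP N d).support, eval x (qk m V d k) * ∏ i, y i ^ k i := by
    rw [← integral_const_mul]
    simp_rw [eval_Kd]
    change ∫ U, ∑ k ∈ (PP N d).support, ev (bk N d k) (Zu V U * Matrix.diagonal x) * ∏ i, y i ^ k i ∂m = _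
    rw [integral_finsetSum _ fun k _ => (integrable_ev m V (bk_symm N d k) _).mul_const _]
    refine Finset.sum_congr rfl fun k _ => ?_
    rw [integral_mul_const, eval_qk]
  rw [mul_assoc, h1, Finset.mul_sum]
  refine Finset.sum_congr rfl fun k _ => ?_
  rw [map_mul, mul_assoc]

lemma sum_symm {N : ℕ} (m : Measure (GU N)) [m.IsHaarMeasure] (V : GU N) (d : ℕ) (x y : Fin N → ℂ) :
    ∑ k ∈ (PP N d).support, eval x (Vp N * qk m V d k) * ∏ i, y i ^ k i =
    ∑ k ∈ (PP N d).support, eval y (Vp N * qk m V d k) * ∏ i, x i ^ k i := by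
  rw [sum_qk, sum_qk, Kd_integral, mul_comm (eval x (Vp N))]

lemma eval_mono' {N : ℕ} (k : Fin N →₀ ℕ) (c : ℂ) (y : Fin N → ℂ) :
    eval y (monomial k c) = c * ∏ i, y i ^ k i := by
  rw [eval_monomial, Finsupp.prod_fintype _ _ (by simp)]

lemma coeff_sym {N : ℕ} (m : Measure (GU N)) [m.IsHaarMeasure] (V : GU N) (d : ℕ)
    (k l : Fin N →₀ ℕ) : coeff k (Vp N * qk m V d l) = coeff l (Vp N * qk m V d k) := by
  have hz : ∀ k, k ∉ (PP N d).support → qk m V d k = 0 := by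
    intro k hk
    apply qk_zero
    exact notMem_support_iff.1 hk
  have h1 : ∀ x : Fin N → ℂ, ∑ k ∈ (PP N d).support, monomial k (eval x (Vp N * qk m V d k)) =
      ∑ k ∈ (PP N d).support, C (∏ i, x i ^ k i) * (Vp N * qk m V d k) := by
    intro x
    apply MvPolynomial.funext
    intro y
    rw [map_sum, map_sum]
    simp_rw [eval_mono']
    rw [sum_symm]
    refine Finset.sum_congr rfl fun k _ => ?_
    rw [map_mul (eval y) (C _), eval_C, mul_comm]
  have h2 : Vp N * qk m V d l = ∑ k ∈ (PP N d).support, monomial k (coeff l (Vp N * qk m V d k)) := by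
    apply MvPolynomial.funext
    intro x
    have := congrArg (coeff l) (h1 x)
    rw [coeff_sum, coeff_sum] at this
    simp only [coeff_monomial, coeff_C_mul] at this
    rw [Finset.sum_ite_eq'] at this
    rw [map_sum]
    simp_rw [eval_mono']
    have h3 : (if l ∈ (PP N d).support then eval x (Vp N * qk m V d l) else 0) = eval x (Vp N * qk m V d l) := by
      split_ifs with h
      · rfl
      · rw [hz l h]; simp
    rw [h3] at this
    rw [this]
    exact Finset.sum_congr rfl fun k _ => mul_comm _ _
  rw [h2, coeff_sum]
  simp only [coeff_monomial]
  rw [Finset.sum_ite_eq']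
  split_ifs with h
  · rfl
  · rw [hz k h]; simp

lemma main_diag {N : ℕ} (m : Measure (GU N)) [m.IsHaarMeasure] (V : GU N) (lam : Fin N → ℕ)
    (hlam : Antitone lam) : ∃ c : ℂ, ∀ x : Fin N → ℂ,
      ∫ U, ev (sp N lam) (Zu V U * Matrix.diagonal x) ∂m = c * schF N lam x := by
  obtain ⟨d, hd⟩ : ∃ d, ∑ i, lam i = d := ⟨_, rfl⟩
  set κ := toF lam + toF (dlt N) with hκ
  have hb : bk N d κ = sp N lam := bk_eq_sp hlam hd
  have hB : Bd (qk m V d κ) (toF lam) := bd_qk m V d _ _ (by rw [hb]; exact bd_sp hlam)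
  refine ⟨coeff κ (Vp N * qk m V d κ), fun x => ?_⟩
  set c := coeff κ (Vp N * qk m V d κ) with hc
  have hD : qk m V d κ - C c * sp N lam = 0 := by
    apply eq_zero_of_coeff
    · intro σ
      rw [map_sub, map_mul, qk_symm m V d κ σ, sp_symm hlam σ]
      simp
    · intro k hk
      have e1 : Vp N * (qk m V d κ - C c * sp N lam) =
          Vp N * qk m V d κ - C c * alt N (fun i => lam i + dlt N i) X := by
        rw [← Vp_mul_sp hlam]; ring
      have e2 : k + toF (dlt N) = toF (fun i => k i + dlt N i) := by ext i; simp
      have e3 := coeff_alt_strict (R := ℂ) (fun i => lam i + dlt N i) (fun i => k i + dlt N i)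
        (strictAnti_add_dlt hlam) (strictAnti_add_dlt (lam := k) hk)
      rw [e1, coeff_sub, coeff_C_mul]
      rw [← e2] at e3
      rw [e3]
      by_cases hkl : lam = k
      · have : toF lam = k := by rw [hkl]; ext i; simp
        rw [if_pos (by rw [hkl]), ← this, ← hκ, ← hc]; ring
      · rw [if_neg (fun h => hkl (funext fun i => by have := congrFun h i; simpa using this)), mul_zero, sub_zero]
        rcases lt_trichotomy (toLex (toF lam)) (toLex k) with h | h | h
        · exact coeff_Vp_mul_eq_zero hB h
        · exact absurd (by rw [← toLex.injective h]; ext i; simp) hkl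
        · rw [coeff_sym]
          apply coeff_Vp_mul_eq_zero _ h
          apply bd_qk
          by_cases hs : ∑ i, k i = d
          · have e4 : toF (k : Fin N → ℕ) = k := by ext i; simp
            have := bk_eq_sp (lam := k) hk hs
            rw [e4] at this
            rw [this]
            have h5 := bd_sp (lam := k) hk
            rwa [e4] at h5
          · rw [bk_eq_zero]
            · intro j hj; simp at hj
            · simpa [Finset.sum_add_distrib, eN] using hs
  have := congrArg (eval x) (sub_eq_zero.1 hD)
  rw [eval_qk, hb, map_mul, eval_C, eval_sp] at this
  exact this

lemma main_all {N : ℕ} (m : Measure (GU N)) [m.IsHaarMeasure] [IsProbabilityMeasure m] (V : GU N) (lam : Fin N → ℕ)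
    (hlam : Antitone lam) (W : Mt N) :
      ∫ U, ev (sp N lam) (Zu V U * W) ∂m =
        ev (sp N lam) (V : Mt N) * ev (sp N lam) W / schF N lam (fun _ => (1:ℂ)) := by
  obtain ⟨c, hc⟩ := main_diag m V lam hlam
  have h1 : ev (sp N lam) (V : Mt N) = c * schF N lam (fun _ => (1:ℂ)) := by
    rw [← hc, Matrix.diagonal_one]
    simp_rw [mul_one, Zu, ev_conj]
    simp
  have hne := schF_one_ne (N := N) (lam := lam)
  obtain ⟨p, hp⟩ := exists_pm (sp_symm hlam)
  let P1 : MvPolynomial (Fin N × Fin N) (CC N) := pm p (mZ V * mX (CC N))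
  have h2 : ∀ Y : Mt N, pm (Int m P1) Y = ∫ U, ev (sp N lam) (Zu V U * Y) ∂m := by
    intro Y
    rw [pm_eval, eval_Int]
    congr 1; ext U
    simp only [P1]
    rw [pm_map, Matrix.map_mul, mZ_EU, mX_EU, hp]
  have h3 : ∀ Y : Mt N, pm (Int m P1 - C c * p) Y =
      ∫ U, ev (sp N lam) (Zu V U * Y) ∂m - c * ev (sp N lam) Y := by
    intro Y; rw [← h2, ← hp]; simp [pm]
  have h4 := lemH (Int m P1 - C c * p) (fun S x => by
    rw [h3, conj_int, ev_conj, hc, ev_diag (sp_symm hlam), eval_sp, sub_self]) W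
  rw [h3, sub_eq_zero] at h4
  rw [h4, h1]
  field_simp

lemma schurMat_eq {N : ℕ} (lam : Fin N → ℕ) (M : Mt N) : schurMat N lam M = ev (sp N lam) M := by
  unfold schurMat ev
  rw [eval_sp, schur_eq]; rfl

end SO
/-- **Schur orthogonality on the unitary group.**
`∫_{U(N)} s_λ(U V U⋆ W) dm_N(U) = s_λ(V) s_λ(W) / d_λ` with `d_λ = s_λ(1, …, 1)`. -/
theorem schur_orthogonality (N : ℕ) (hN : 0 < N) (lam : Fin N → ℕ) (hlam : Antitone lam)
    (m : Measure (Matrix.unitaryGroup (Fin N) ℂ))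
    [m.IsHaarMeasure] [IsProbabilityMeasure m]
    (V W : Matrix.unitaryGroup (Fin N) ℂ) :
    (∫ U, schurMat N lam ((U : Matrix (Fin N) (Fin N) ℂ) * (V : Matrix (Fin N) (Fin N) ℂ) *
        star (U : Matrix (Fin N) (Fin N) ℂ) * (W : Matrix (Fin N) (Fin N) ℂ)) ∂m)
      = schurMat N lam (V : Matrix (Fin N) (Fin N) ℂ) *
          schurMat N lam (W : Matrix (Fin N) (Fin N) ℂ) /
          schur N lam (fun _ => (1 : ℂ)) := by
  rw [SO.schur_eq, SO.schurMat_eq, SO.schurMat_eq, ← SO.main_all m V lam hlam W]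
  simp_rw [SO.schurMat_eq]
  rfl
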